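/- arXiv:1209.4256 — 6 statements merged into one kernel-verified Lean document; each statement's English description precedes it below -/
import Mathlib

section
/- Let R = Q/𝔤₂ where 𝔤₂ = (xy², xyz, yz², x⁴ − y³z, xz³ − y⁴, x³y − z⁴) ⊆ Q. Then the socle (0 :_R 𝔪) of R is equal to the R-submodule generated by the images of x⁴y and x³z², and its dimension as a k-vector space is 2 (that is, R has type 2). -/
/-!
The ring `R = Q/g2` is graded with Hilbert function `1, 3, 6, 7, 5, 2`. In degree five it is spanned
by `p = x⁴y = y⁴z = xz⁴` and `q = x³z²`, and everything in degree six vanishes, so `p` and `q` lie in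
the socle.

* Conversely, multiplication into degree five is nondegenerate in every lower degree. Since every
  element of `R` is a constant plus a combination of `x, y, z`, an element annihilated by `x, y, z`
  can be expanded one degree at a time; multiplying it by suitable monomials of complementary degree
  gives `k`-linear relations between `p` and `q`, which force all the coefficients in degrees
  `0` to `4` to vanish (`G2Rel.exists_eq_of_socle`). This step uses only the defining relations,
  the decomposition and the linear independence of `p` and `q` over `k`.
* The independence of `p` and `q` comes from two linear functionals on `Q` that vanish on `g2`,
  given by the inverse system `X⁴Y + Y⁴Z + XZ⁴`, `X³Z²` (`functional_eq_zero`).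
-/

noncomputable section

/-- The variable `x` in `Q = k[[x,y,z]]`. -/
def xx (k : Type*) [Field k] : MvPowerSeries (Fin 3) k := MvPowerSeries.X 0
/-- The variable `y` in `Q = k[[x,y,z]]`. -/
def yy (k : Type*) [Field k] : MvPowerSeries (Fin 3) k := MvPowerSeries.X 1
/-- The variable `z` in `Q = k[[x,y,z]]`. -/
def zz (k : Type*) [Field k] : MvPowerSeries (Fin 3) k := MvPowerSeries.X 2

/-- The ideal `g2` of the paper. -/
def Ig2 (k : Type*) [Field k] : Ideal (MvPowerSeries (Fin 3) k) :=
  Ideal.span {xx k * yy k ^ 2, xx k * yy k * zz k, yy k * zz k ^ 2, xx k ^ 4 - yy k ^ 3 * zz k, xx k * zz k ^ 3 - yy k ^ 4, xx k ^ 3 * yy k - zz k ^ 4}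

/-! ### The relations and the pairing into degree five -/

/-- The elements `x, y, z` satisfy the defining relations of `Q/g2`. -/
structure G2Rel {R : Type*} [CommRing R] (x y z : R) : Prop where
  h1 : x * y ^ 2 = 0
  h2 : x * y * z = 0
  h3 : y * z ^ 2 = 0
  h4 : x ^ 4 = y ^ 3 * z
  h5 : x * z ^ 3 = y ^ 4
  h6 : x ^ 3 * y = z ^ 4

section Abstract

variable {k R : Type*} [Field k] [CommRing R] [Algebra k R] {x y z : R}

/-- Since `x, y, z` annihilate `x⁴y`, multiplication by it sees only the constant term. -/
theorem G2Rel.p_mul (h : G2Rel x y z) (c r₁ r₂ r₃ : R) :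
    x ^ 4 * y * (c + x * r₁ + y * r₂ + z * r₃) = c * (x ^ 4 * y) := by
  obtain ⟨h1, h2, h3, h4, h5, h6⟩ := h
  grind

/-- Since `x, y, z` annihilate `x³z²`, multiplication by it sees only the constant term. -/
theorem G2Rel.q_mul (h : G2Rel x y z) (c r₁ r₂ r₃ : R) :
    x ^ 3 * z ^ 2 * (c + x * r₁ + y * r₂ + z * r₃) = c * (x ^ 3 * z ^ 2) := by
  obtain ⟨h1, h2, h3, h4, h5, h6⟩ := h
  grind

/-- An element without constant term, expanded one degree further. The pairing with degree four
(by `x³y`, `x⁴`, `y⁴`) reads off its linear coefficients. -/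
theorem G2Rel.pairing_one (h : G2Rel x y z) (a b c r₁ r₂ r₃ r₄ r₅ r₆ r : R)
    (hr : r = a * x + b * y + c * z + x ^ 2 * r₁ + x * y * r₂ + x * z * r₃ + y ^ 2 * r₄
      + y * z * r₅ + z ^ 2 * r₆) :
    x ^ 3 * y * r = a * (x ^ 4 * y) ∧ x ^ 4 * r = b * (x ^ 4 * y) ∧
      y ^ 4 * r = c * (x ^ 4 * y) := by
  obtain ⟨h1, h2, h3, h4, h5, h6⟩ := h
  subst hr
  refine ⟨?_, ?_, ?_⟩ <;> grind

/-- The pairing between degrees two and three, on an element with no terms of degree `< 2`. -/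
theorem G2Rel.pairing_two (h : G2Rel x y z) (a b c d e f r₁ r₂ r₃ r₄ r₅ r₆ r₇ r : R)
    (hr : r = a * x ^ 2 + b * (x * y) + c * (x * z) + d * y ^ 2 + e * (y * z) + f * z ^ 2
      + x ^ 3 * r₁ + x ^ 2 * y * r₂ + x ^ 2 * z * r₃ + x * z ^ 2 * r₄ + y ^ 3 * r₅
      + y ^ 2 * z * r₆ + z ^ 3 * r₇) :
    x ^ 2 * y * r = a * (x ^ 4 * y) ∧
      x ^ 3 * r = b * (x ^ 4 * y) + f * (x ^ 3 * z ^ 2) ∧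
      z ^ 3 * r = c * (x ^ 4 * y) ∧
      y ^ 2 * z * r = d * (x ^ 4 * y) ∧ y ^ 3 * r = e * (x ^ 4 * y) := by
  obtain ⟨h1, h2, h3, h4, h5, h6⟩ := h
  subst hr
  refine ⟨?_, ?_, ?_, ?_, ?_⟩ <;> grind

/-- The pairing between degrees three and two, on an element with no terms of degree `< 3`. -/
theorem G2Rel.pairing_three (h : G2Rel x y z) (a b c d e f g r₁ r₂ r₃ r₄ r₅ r : R)
    (hr : r = a * x ^ 3 + b * (x ^ 2 * y) + c * (x ^ 2 * z) + d * (x * z ^ 2) + e * y ^ 3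
      + f * (y ^ 2 * z) + g * z ^ 3
      + x ^ 4 * r₁ + x ^ 3 * y * r₂ + x ^ 3 * z * r₃ + x ^ 2 * z ^ 2 * r₄ + y ^ 4 * r₅) :
    x * y * r = a * (x ^ 4 * y) ∧
      x ^ 2 * r = b * (x ^ 4 * y) + d * (x ^ 3 * z ^ 2) ∧
      x * z * r = g * (x ^ 4 * y) + c * (x ^ 3 * z ^ 2) ∧
      y * z * r = e * (x ^ 4 * y) ∧ y ^ 2 * r = f * (x ^ 4 * y) := by
  obtain ⟨h1, h2, h3, h4, h5, h6⟩ := h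
  subst hr
  refine ⟨?_, ?_, ?_, ?_, ?_⟩ <;> grind

/-- The pairing between degrees four and one, on an element with no terms of degree `< 4`. -/
theorem G2Rel.pairing_four (h : G2Rel x y z) (a b c d e r₁ r₂ r : R)
    (hr : r = a * x ^ 4 + b * (x ^ 3 * y) + c * (x ^ 3 * z) + d * (x ^ 2 * z ^ 2) + e * y ^ 4
      + x ^ 4 * y * r₁ + x ^ 3 * z ^ 2 * r₂) :
    x * r = b * (x ^ 4 * y) + d * (x ^ 3 * z ^ 2) ∧ y * r = a * (x ^ 4 * y) ∧
      z * r = e * (x ^ 4 * y) + c * (x ^ 3 * z ^ 2) := by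
  obtain ⟨h1, h2, h3, h4, h5, h6⟩ := h
  subst hr
  refine ⟨?_, ?_, ?_⟩ <;> grind

/-- If `x, y, z` generate `R` up to constants, satisfy the relations of `g2`, and `x⁴y`, `x³z²` are
`k`-linearly independent, then every element annihilated by `x, y, z` is a `k`-combination of
`x⁴y` and `x³z²`. -/
theorem G2Rel.exists_eq_of_socle (h : G2Rel x y z)
    (hdec : ∀ r : R, ∃ (c : k) (r₁ r₂ r₃ : R),
      r = algebraMap k R c + x * r₁ + y * r₂ + z * r₃)
    (hind : ∀ a b : k, algebraMap k R a * (x ^ 4 * y) + algebraMap k R b * (x ^ 3 * z ^ 2) = 0 →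
      a = 0 ∧ b = 0)
    (r : R) (hx : x * r = 0) (hy : y * r = 0) (hz : z * r = 0) :
    ∃ a b : k, r = algebraMap k R a * (x ^ 4 * y) + algebraMap k R b * (x ^ 3 * z ^ 2) := by
  have hind1 : ∀ a : k, algebraMap k R a * (x ^ 4 * y) = 0 → a = 0 := fun a ha =>
    (hind a 0 (by simp [ha])).1
  -- The constant term vanishes because `r` annihilates `x⁴y`.
  obtain ⟨c, u, v, w, hr⟩ := hdec r
  obtain rfl : c = 0 := hind1 c (by
    rw [← h.p_mul _ u v w, ← hr]; linear_combination x ^ 3 * y * hx)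
  -- The linear coefficients are isolated by monomials of degree four.
  obtain ⟨a, u₁, u₂, u₃, rfl⟩ := hdec u
  obtain ⟨b, v₁, v₂, v₃, rfl⟩ := hdec v
  obtain ⟨c, w₁, w₂, w₃, rfl⟩ := hdec w
  rw [map_zero] at hr
  obtain ⟨e1, e2, e3⟩ := h.pairing_one (algebraMap k R a) (algebraMap k R b) (algebraMap k R c)
    u₁ (u₂ + v₁) (u₃ + w₁) v₂ (v₃ + w₂) w₃ r (by rw [hr]; ring)
  obtain rfl : a = 0 := hind1 a (by rw [← e1]; linear_combination x ^ 2 * y * hx)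
  obtain rfl : b = 0 := hind1 b (by rw [← e2]; linear_combination x ^ 3 * hx)
  obtain rfl : c = 0 := hind1 c (by rw [← e3]; linear_combination y ^ 3 * hy)
  rw [map_zero] at hr
  clear e1 e2 e3
  replace hr : ∃ s₁ s₂ s₃ s₄ s₅ s₆ : R, r = x ^ 2 * s₁ + x * y * s₂ + x * z * s₃ + y ^ 2 * s₄
      + y * z * s₅ + z ^ 2 * s₆ :=
    ⟨u₁, u₂ + v₁, u₃ + w₁, v₂, v₃ + w₂, w₃, by rw [hr]; ring⟩
  clear u₁ u₂ u₃ v₁ v₂ v₃ w₁ w₂ w₃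
  -- The pairing by `x³` gives a relation between `p` and `q` in which the coefficients of `xy` and
  -- `z²` appear together; independence kills both.
  obtain ⟨s₁, s₂, s₃, s₄, s₅, s₆, hr⟩ := hr
  obtain ⟨a, a₁, a₂, a₃, rfl⟩ := hdec s₁
  obtain ⟨b, b₁, b₂, b₃, rfl⟩ := hdec s₂
  obtain ⟨c, c₁, c₂, c₃, rfl⟩ := hdec s₃
  obtain ⟨d, d₁, d₂, d₃, rfl⟩ := hdec s₄
  obtain ⟨e, e₁, e₂, e₃, rfl⟩ := hdec s₅
  obtain ⟨f, f₁, f₂, f₃, rfl⟩ := hdec s₆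
  replace hr : ∃ t₁ t₂ t₃ t₄ t₅ t₆ t₇ : R, r = algebraMap k R a * x ^ 2
      + algebraMap k R b * (x * y) + algebraMap k R c * (x * z) + algebraMap k R d * y ^ 2
      + algebraMap k R e * (y * z) + algebraMap k R f * z ^ 2
      + x ^ 3 * t₁ + x ^ 2 * y * t₂ + x ^ 2 * z * t₃ + x * z ^ 2 * t₄ + y ^ 3 * t₅
      + y ^ 2 * z * t₆ + z ^ 3 * t₇ := by
    refine ⟨a₁, a₂ + b₁, a₃ + c₁, c₃ + f₁, d₂, d₃ + e₂, f₃, ?_⟩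
    rw [hr]
    linear_combination (b₂ + d₁) * h.h1 + (b₃ + c₂ + e₁) * h.h2 + (e₃ + f₂) * h.h3
  obtain ⟨t₁, t₂, t₃, t₄, t₅, t₆, t₇, hr⟩ := hr
  obtain ⟨e1, e2, e3, e4, e5⟩ := h.pairing_two _ _ _ _ _ _ _ _ _ _ _ _ _ r hr
  obtain rfl : a = 0 := hind1 a (by rw [← e1]; linear_combination x * y * hx)
  obtain ⟨rfl, rfl⟩ : b = 0 ∧ f = 0 :=
    hind b f (by rw [← e2]; linear_combination x ^ 2 * hx)
  obtain rfl : c = 0 := hind1 c (by rw [← e3]; linear_combination z ^ 2 * hz)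
  obtain rfl : d = 0 := hind1 d (by rw [← e4]; linear_combination y * z * hy)
  obtain rfl : e = 0 := hind1 e (by rw [← e5]; linear_combination y ^ 2 * hy)
  rw [map_zero] at hr
  clear e1 e2 e3 e4 e5 a₁ a₂ a₃ b₁ b₂ b₃ c₁ c₂ c₃ d₁ d₂ d₃ e₁ e₂ e₃ f₁ f₂ f₃
  -- Degree three: the monomials killed by the relations drop out, and `y³z`, `xz³`, `z⁴` are
  -- rewritten as `x⁴`, `y⁴`, `x³y` in the expansion.
  obtain ⟨a, a₁, a₂, a₃, rfl⟩ := hdec t₁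
  obtain ⟨b, b₁, b₂, b₃, rfl⟩ := hdec t₂
  obtain ⟨c, c₁, c₂, c₃, rfl⟩ := hdec t₃
  obtain ⟨d, d₁, d₂, d₃, rfl⟩ := hdec t₄
  obtain ⟨e, e₁, e₂, e₃, rfl⟩ := hdec t₅
  obtain ⟨f, f₁, f₂, f₃, rfl⟩ := hdec t₆
  obtain ⟨g, g₁, g₂, g₃, rfl⟩ := hdec t₇
  replace hr : ∃ t₁ t₂ t₃ t₄ t₅ : R, r = algebraMap k R a * x ^ 3
      + algebraMap k R b * (x ^ 2 * y) + algebraMap k R c * (x ^ 2 * z)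
      + algebraMap k R d * (x * z ^ 2) + algebraMap k R e * y ^ 3
      + algebraMap k R f * (y ^ 2 * z) + algebraMap k R g * z ^ 3
      + x ^ 4 * t₁ + x ^ 3 * y * t₂ + x ^ 3 * z * t₃ + x ^ 2 * z ^ 2 * t₄ + y ^ 4 * t₅ := by
    refine ⟨a₁ + e₃ + f₂, a₂ + b₁ + g₃, a₃ + c₁, c₃ + d₁, d₃ + e₂ + g₁, ?_⟩
    rw [hr]
    linear_combination (x * b₂ + y * e₁ + z * f₁) * h.h1 + (x * b₃ + x * c₂ + z * d₂) * h.h2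
      + (y * f₃ + z * g₂) * h.h3 - (e₃ + f₂) * h.h4 + (d₃ + g₁) * h.h5 - g₃ * h.h6
  obtain ⟨t₁, t₂, t₃, t₄, t₅, hr⟩ := hr
  obtain ⟨e1, e2, e3, e4, e5⟩ := h.pairing_three _ _ _ _ _ _ _ _ _ _ _ _ r hr
  obtain rfl : a = 0 := hind1 a (by rw [← e1]; linear_combination y * hx)
  obtain ⟨rfl, rfl⟩ : b = 0 ∧ d = 0 :=
    hind b d (by rw [← e2]; linear_combination x * hx)
  obtain ⟨rfl, rfl⟩ : g = 0 ∧ c = 0 :=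
    hind g c (by rw [← e3]; linear_combination z * hx)
  obtain rfl : e = 0 := hind1 e (by rw [← e4]; linear_combination z * hy)
  obtain rfl : f = 0 := hind1 f (by rw [← e5]; linear_combination y * hy)
  rw [map_zero] at hr
  clear e1 e2 e3 e4 e5 a₁ a₂ a₃ b₁ b₂ b₃ c₁ c₂ c₃ d₁ d₂ d₃ e₁ e₂ e₃ f₁ f₂ f₃ g₁ g₂ g₃
  -- Degree four is paired with `x, y, z` themselves.
  obtain ⟨a, a₁, a₂, a₃, rfl⟩ := hdec t₁
  obtain ⟨b, b₁, b₂, b₃, rfl⟩ := hdec t₂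
  obtain ⟨c, c₁, c₂, c₃, rfl⟩ := hdec t₃
  obtain ⟨d, d₁, d₂, d₃, rfl⟩ := hdec t₄
  obtain ⟨e, e₁, e₂, e₃, rfl⟩ := hdec t₅
  replace hr : ∃ t₁ t₂ : R, r = algebraMap k R a * x ^ 4
      + algebraMap k R b * (x ^ 3 * y) + algebraMap k R c * (x ^ 3 * z)
      + algebraMap k R d * (x ^ 2 * z ^ 2) + algebraMap k R e * y ^ 4
      + x ^ 4 * y * t₁ + x ^ 3 * z ^ 2 * t₂ := by
    refine ⟨a₂ + b₁ + e₃, c₃ + d₁, ?_⟩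
    rw [hr]
    obtain ⟨h1, h2, h3, h4, h5, h6⟩ := h
    grind
  obtain ⟨t₁, t₂, hr⟩ := hr
  obtain ⟨e1, e2, e3⟩ := h.pairing_four _ _ _ _ _ _ _ r hr
  obtain ⟨rfl, rfl⟩ : b = 0 ∧ d = 0 := hind b d (by rw [← e1, hx])
  obtain rfl : a = 0 := hind1 a (by rw [← e2, hy])
  obtain ⟨rfl, rfl⟩ : e = 0 ∧ c = 0 := hind e c (by rw [← e3, hz])
  rw [map_zero] at hr
  -- What remains is a combination of `p` and `q`; only the constant terms of its coefficients count.
  obtain ⟨a, u₁, u₂, u₃, rfl⟩ := hdec t₁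
  obtain ⟨b, v₁, v₂, v₃, rfl⟩ := hdec t₂
  refine ⟨a, b, ?_⟩
  rw [hr, h.p_mul, h.q_mul]
  ring

end Abstract

/-! ### Power series: the inverse system and the constant term -/

section PowerSeries

open MvPowerSeries

variable {k : Type*} [Field k]

/-- The exponent of the monomial `x^a y^b z^c`. -/
def expo (a b c : ℕ) : Fin 3 →₀ ℕ :=
  Finsupp.single 0 a + Finsupp.single 1 b + Finsupp.single 2 c

theorem coeff_expo_mul (f : MvPowerSeries (Fin 3) k) (a b c i j l : ℕ) :
    coeff (expo a b c) (f * (xx k ^ i * yy k ^ j * zz k ^ l)) =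
      if i ≤ a ∧ j ≤ b ∧ l ≤ c then coeff (expo (a - i) (b - j) (c - l)) f else 0 := by
  have hmon : xx k ^ i * yy k ^ j * zz k ^ l = monomial (expo i j l) 1 := by
    simp [xx, yy, zz, X_pow_eq, monomial_mul_monomial, expo]
  have hle : expo i j l ≤ expo a b c ↔ i ≤ a ∧ j ≤ b ∧ l ≤ c := by
    rw [Finsupp.le_def]
    simp [Fin.forall_fin_succ, expo, Finsupp.single_apply]
  have hsub : expo a b c - expo i j l = expo (a - i) (b - j) (c - l) := by
    ext t
    fin_cases t <;> simp [expo]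
  rw [hmon, coeff_mul_monomial, hsub, mul_one]
  simp only [hle]

/-- The functionals attached to `X⁴Y + Y⁴Z + XZ⁴` and `X³Z²` in Macaulay's inverse system vanish
on `g2`. -/
theorem functional_eq_zero {f : MvPowerSeries (Fin 3) k} (hf : f ∈ Ig2 k) :
    coeff (expo 4 1 0) f + coeff (expo 0 4 1) f + coeff (expo 1 0 4) f = 0 ∧
      coeff (expo 3 0 2) f = 0 := by
  simp only [Ig2, Ideal.mem_span_insert, Ideal.mem_span_singleton'] at hf
  obtain ⟨a₁, _, ⟨a₂, _, ⟨a₃, _, ⟨a₄, _, ⟨a₅, _, ⟨a₆, rfl⟩, rfl⟩, rfl⟩, rfl⟩, rfl⟩, rfl⟩ := hf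
  have key : a₁ * (xx k * yy k ^ 2) + (a₂ * (xx k * yy k * zz k) + (a₃ * (yy k * zz k ^ 2) +
      (a₄ * (xx k ^ 4 - yy k ^ 3 * zz k) + (a₅ * (xx k * zz k ^ 3 - yy k ^ 4) +
        a₆ * (xx k ^ 3 * yy k - zz k ^ 4))))) =
      a₁ * (xx k ^ 1 * yy k ^ 2 * zz k ^ 0) + a₂ * (xx k ^ 1 * yy k ^ 1 * zz k ^ 1)
      + a₃ * (xx k ^ 0 * yy k ^ 1 * zz k ^ 2)
      + (a₄ * (xx k ^ 4 * yy k ^ 0 * zz k ^ 0) - a₄ * (xx k ^ 0 * yy k ^ 3 * zz k ^ 1))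
      + (a₅ * (xx k ^ 1 * yy k ^ 0 * zz k ^ 3) - a₅ * (xx k ^ 0 * yy k ^ 4 * zz k ^ 0))
      + (a₆ * (xx k ^ 3 * yy k ^ 1 * zz k ^ 0) - a₆ * (xx k ^ 0 * yy k ^ 0 * zz k ^ 4)) := by
    ring
  rw [key]
  simp only [map_add, map_sub, coeff_expo_mul]
  norm_num
  ring

/-- Every power series is a constant plus an element of the ideal `(x, y, z)`. -/
theorem exists_decomposition (f : MvPowerSeries (Fin 3) k) :
    ∃ (c : k) (f₁ f₂ f₃ : MvPowerSeries (Fin 3) k),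
      f = C c + xx k * f₁ + yy k * f₂ + zz k * f₃ := by
  classical
  -- Sort the monomials of `f` by the first variable that occurs in them.
  let g₁ : MvPowerSeries (Fin 3) k := fun m => if m 0 ≠ 0 then coeff m f else 0
  let g₂ : MvPowerSeries (Fin 3) k := fun m => if m 0 = 0 ∧ m 1 ≠ 0 then coeff m f else 0
  let g₃ : MvPowerSeries (Fin 3) k :=
    fun m => if m 0 = 0 ∧ m 1 = 0 ∧ m 2 ≠ 0 then coeff m f else 0
  have hg₁ : ∀ m, coeff m g₁ = if m 0 ≠ 0 then coeff m f else 0 := fun _ => rfl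
  have hg₂ : ∀ m, coeff m g₂ = if m 0 = 0 ∧ m 1 ≠ 0 then coeff m f else 0 := fun _ => rfl
  have hg₃ : ∀ m, coeff m g₃ = if m 0 = 0 ∧ m 1 = 0 ∧ m 2 ≠ 0 then coeff m f else 0 :=
    fun _ => rfl
  obtain ⟨f₁, h₁⟩ : xx k ∣ g₁ := X_dvd_iff.2 fun m hm => by simp [hg₁, hm]
  obtain ⟨f₂, h₂⟩ : yy k ∣ g₂ := X_dvd_iff.2 fun m hm => by simp [hg₂, hm]
  obtain ⟨f₃, h₃⟩ : zz k ∣ g₃ := X_dvd_iff.2 fun m hm => by simp [hg₃, hm]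
  refine ⟨coeff 0 f, f₁, f₂, f₃, ?_⟩
  rw [← h₁, ← h₂, ← h₃]
  ext m
  have hm : m = 0 ↔ m 0 = 0 ∧ m 1 = 0 ∧ m 2 = 0 := by
    simp [Finsupp.ext_iff, Fin.forall_fin_succ]
  rw [map_add, map_add, map_add, hg₁, hg₂, hg₃, coeff_C]
  by_cases h : m = 0
  · subst h
    simp
  · rw [if_neg h]
    rw [hm] at h
    by_cases i0 : m 0 = 0 <;> by_cases i1 : m 1 = 0 <;> by_cases i2 : m 2 = 0 <;> simp_all

end PowerSeries

/-! ### The socle of the quotient -/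

section Quotient

variable (k : Type*) [Field k]

theorem g2Rel_quotient : G2Rel (Ideal.Quotient.mk (Ig2 k) (xx k))
    (Ideal.Quotient.mk (Ig2 k) (yy k)) (Ideal.Quotient.mk (Ig2 k) (zz k)) := by
  constructor <;>
    simp only [← map_mul, ← map_pow, Ideal.Quotient.eq_zero_iff_mem, Ideal.Quotient.eq]
  · exact Ideal.subset_span (by simp)
  · exact Ideal.subset_span (by simp)
  · exact Ideal.subset_span (by simp)
  · exact Ideal.subset_span (by simp)
  · exact Ideal.subset_span (by simp)
  · exact Ideal.subset_span (by simp)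

theorem algebraMap_quotient (c : k) :
    algebraMap k (MvPowerSeries (Fin 3) k ⧸ Ig2 k) c =
      Ideal.Quotient.mk (Ig2 k) (MvPowerSeries.C c) := rfl

/-- `Algebra.smul_def`, for the scalar action that instance search finds on `Q/g2`. -/
theorem smul_quotient (c : k) (r : MvPowerSeries (Fin 3) k ⧸ Ig2 k) :
    c • r = algebraMap k (MvPowerSeries (Fin 3) k ⧸ Ig2 k) c * r :=
  Algebra.smul_def c r

theorem independent_quotient (a b : k)
    (h : algebraMap k (MvPowerSeries (Fin 3) k ⧸ Ig2 k) a *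
        (Ideal.Quotient.mk (Ig2 k) (xx k) ^ 4 * Ideal.Quotient.mk (Ig2 k) (yy k)) +
      algebraMap k (MvPowerSeries (Fin 3) k ⧸ Ig2 k) b *
        (Ideal.Quotient.mk (Ig2 k) (xx k) ^ 3 * Ideal.Quotient.mk (Ig2 k) (zz k) ^ 2) = 0) :
    a = 0 ∧ b = 0 := by
  rw [algebraMap_quotient, algebraMap_quotient] at h
  simp only [← map_mul, ← map_pow, ← map_add, Ideal.Quotient.eq_zero_iff_mem] at h
  have key : MvPowerSeries.C a * (xx k ^ 4 * yy k) + MvPowerSeries.C b * (xx k ^ 3 * zz k ^ 2) =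
      MvPowerSeries.C a * (xx k ^ 4 * yy k ^ 1 * zz k ^ 0) +
      MvPowerSeries.C b * (xx k ^ 3 * yy k ^ 0 * zz k ^ 2) := by ring
  rw [key] at h
  have h0 : expo 0 0 0 = 0 := by simp [expo]
  have := functional_eq_zero h
  simp only [map_add, coeff_expo_mul] at this
  simpa [h0] using this

/-- The socle of `Q/g2` consists of the `k`-combinations of `x⁴y` and `x³z²`. -/
theorem mem_socle_iff (r : MvPowerSeries (Fin 3) k ⧸ Ig2 k) :
    r ∈ (⊥ : Ideal (MvPowerSeries (Fin 3) k ⧸ Ig2 k)).colon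
        (Ideal.map (Ideal.Quotient.mk (Ig2 k)) (Ideal.span {xx k, yy k, zz k})) ↔
      ∃ a b : k, r = a • Ideal.Quotient.mk (Ig2 k) (xx k ^ 4 * yy k) +
        b • Ideal.Quotient.mk (Ig2 k) (xx k ^ 3 * zz k ^ 2) := by
  have h := g2Rel_quotient k
  have hker : r ∈ (⊥ : Ideal (MvPowerSeries (Fin 3) k ⧸ Ig2 k)).colon
        (Ideal.map (Ideal.Quotient.mk (Ig2 k)) (Ideal.span {xx k, yy k, zz k})) ↔
      Ideal.Quotient.mk (Ig2 k) (xx k) * r = 0 ∧ Ideal.Quotient.mk (Ig2 k) (yy k) * r = 0 ∧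
        Ideal.Quotient.mk (Ig2 k) (zz k) * r = 0 := by
    rw [Ideal.map_span, Ideal.colon_span, Submodule.mem_colon]
    simp [Set.image_insert_eq, mul_comm r]
  rw [hker]
  simp only [smul_quotient, map_mul, map_pow]
  constructor
  · rintro ⟨hx, hy, hz⟩
    refine h.exists_eq_of_socle ?_ (independent_quotient k) r hx hy hz
    intro s
    obtain ⟨f, rfl⟩ := Ideal.Quotient.mk_surjective s
    obtain ⟨c, f₁, f₂, f₃, hf⟩ := exists_decomposition f
    refine ⟨c, Ideal.Quotient.mk _ f₁, Ideal.Quotient.mk _ f₂, Ideal.Quotient.mk _ f₃, ?_⟩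
    rw [algebraMap_quotient, ← map_mul, ← map_mul, ← map_mul, ← map_add, ← map_add, ← map_add,
      ← hf]
  · rintro ⟨a, b, rfl⟩
    generalize Ideal.Quotient.mk (Ig2 k) (xx k) = x at *
    generalize Ideal.Quotient.mk (Ig2 k) (yy k) = y at *
    generalize Ideal.Quotient.mk (Ig2 k) (zz k) = z at *
    have p1 := h.p_mul 0 1 0 0
    have p2 := h.p_mul 0 0 1 0
    have p3 := h.p_mul 0 0 0 1
    have q1 := h.q_mul 0 1 0 0
    have q2 := h.q_mul 0 0 1 0
    have q3 := h.q_mul 0 0 0 1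
    refine ⟨?_, ?_, ?_⟩
    · linear_combination algebraMap k _ a * p1 + algebraMap k _ b * q1
    · linear_combination algebraMap k _ a * p2 + algebraMap k _ b * q2
    · linear_combination algebraMap k _ a * p3 + algebraMap k _ b * q3

end Quotient

/-- The socle `(0 :_R m)` of `R = Q/g2`. -/
theorem socle_g2 (k : Type*) [Field k] :
    (⊥ : Ideal (MvPowerSeries (Fin 3) k ⧸ Ig2 k)).colon
        (Ideal.map (Ideal.Quotient.mk (Ig2 k)) (Ideal.span {xx k, yy k, zz k}))
      = Ideal.span {Ideal.Quotient.mk (Ig2 k) (xx k ^ 4 * yy k), Ideal.Quotient.mk (Ig2 k) (xx k ^ 3 * zz k ^ 2)} ∧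
    Module.finrank k (Submodule.restrictScalars k
      ((⊥ : Ideal (MvPowerSeries (Fin 3) k ⧸ Ig2 k)).colon
        (Ideal.map (Ideal.Quotient.mk (Ig2 k)) (Ideal.span {xx k, yy k, zz k})))) = 2 := by
  constructor
  · apply le_antisymm
    · intro r hr
      obtain ⟨a, b, rfl⟩ := (mem_socle_iff k r).1 hr
      rw [smul_quotient, smul_quotient]
      exact Ideal.mem_span_pair.2 ⟨_, _, rfl⟩
    · rw [Ideal.span_le, Set.insert_subset_iff, Set.singleton_subset_iff]
      exact ⟨(mem_socle_iff k _).2 ⟨1, 0, by simp⟩, (mem_socle_iff k _).2 ⟨0, 1, by simp⟩⟩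
  · have hspan : Submodule.restrictScalars k
        ((⊥ : Ideal (MvPowerSeries (Fin 3) k ⧸ Ig2 k)).colon
          (Ideal.map (Ideal.Quotient.mk (Ig2 k)) (Ideal.span {xx k, yy k, zz k}))) =
        Submodule.span k (Set.range ![Ideal.Quotient.mk (Ig2 k) (xx k ^ 4 * yy k),
          Ideal.Quotient.mk (Ig2 k) (xx k ^ 3 * zz k ^ 2)]) := by
      ext r
      rw [Submodule.restrictScalars_mem, mem_socle_iff, Matrix.range_cons, Matrix.range_cons,
        Matrix.range_empty, Set.union_empty, Set.singleton_union, Submodule.mem_span_pair]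
      simp only [eq_comm]
    have hli : LinearIndependent k ![Ideal.Quotient.mk (Ig2 k) (xx k ^ 4 * yy k),
        Ideal.Quotient.mk (Ig2 k) (xx k ^ 3 * zz k ^ 2)] := by
      rw [LinearIndependent.pair_iff]
      intro a b hab
      rw [smul_quotient, smul_quotient] at hab
      simp only [map_mul, map_pow] at hab
      exact independent_quotient k a b hab
    rw [hspan, finrank_span_eq_card hli, Fintype.card_fin]
end
end

section
/- Let R = Q/𝔟₄ where 𝔟₄ = (x³, x²y, yz², z³, xyz, xy² − y³, y²z) ⊆ Q. Then the socle (0 :_R 𝔪) of R is equal to the R-submodule generated by the images of x²z², xy², and yz, and its dimension as a k-vector space is 3 (that is, R has type 3). -/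
/-!
The ring `R = Q/𝔟₄` has a `k`-basis of fourteen monomials: the nine `x^a z^c` with `a, c ≤ 2`,
together with `y, xy, y², yz` and `xy² = y³`. That they span (`exists_std`) follows by
repeatedly splitting a power series into its constant term and an element of `(x, y, z)`; the
process stops because every sufficiently large monomial lies in `𝔟₄`. That they are independent
follows from fourteen coefficient functionals that vanish on `𝔟₄` (`coeff_of_mem`): the
coefficients of the first thirteen monomials, and the sum of those of `xy²` and `y³`.

In this basis multiplication by a variable sends each basis element to a basis element or to zero.
Multiplication by `x` kills only the span of `x²z^c`, `xy`, `xy²`, `yz`; on it, `z` is injective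
on the span of `x², x²z`, and `y` sends `xy` to `xy²`. This leaves `x²z²`, `xy²` and `yz`, which
all three variables kill (`exists_of_socle`). So every `R`-multiple of these is a `k`-multiple,
the ideal they generate is their `k`-span, and the dimension is three.
-/

/-!
STATEMENT 7: For `R = Q/b4`, the socle `(0 :_R m)` of `R` (where `m` is the
maximal ideal of `R`, the image of `(x,y,z)`) equals the `R`-submodule generated by
the images of x^2*z^2, x*y^2, y*z, and its dimension as a `k`-vector space is 3 (so `R` has type 3).

Here `Q = k[[x,y,z]]` is formalized as `MvPowerSeries (Fin 3) k` with
`x = X 0`, `y = X 1`, `z = X 2`.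
-/

noncomputable section

/-- The ideal `b4` of the paper. -/
def Ib4 (k : Type*) [Field k] : Ideal (MvPowerSeries (Fin 3) k) :=
  Ideal.span {xx k ^ 3, xx k ^ 2 * yy k, yy k * zz k ^ 2, zz k ^ 3, xx k * yy k * zz k, xx k * yy k ^ 2 - yy k ^ 3, yy k ^ 2 * zz k}

/-! ### Monomials and their coefficients -/

/-- The exponent vector `(a, b, c)`. -/
def ex (a b c : ℕ) : Fin 3 →₀ ℕ := Finsupp.single 0 a + Finsupp.single 1 b + Finsupp.single 2 c

/-- The monomial `x ^ a * y ^ b * z ^ c`. -/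
def mono (k : Type*) [Field k] (a b c : ℕ) : MvPowerSeries (Fin 3) k :=
  MvPowerSeries.monomial (ex a b c) 1

lemma ex_apply_zero (a b c : ℕ) : ex a b c 0 = a := by simp [ex]
lemma ex_apply_one (a b c : ℕ) : ex a b c 1 = b := by simp [ex]
lemma ex_apply_two (a b c : ℕ) : ex a b c 2 = c := by simp [ex]

lemma ex_add (a b c a' b' c' : ℕ) : ex a b c + ex a' b' c' = ex (a + a') (b + b') (c + c') := by
  ext i; fin_cases i <;> simp [ex]

lemma ex_le (a b c a' b' c' : ℕ) : ex a b c ≤ ex a' b' c' ↔ a ≤ a' ∧ b ≤ b' ∧ c ≤ c' := by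
  rw [Finsupp.le_def, Fin.forall_fin_succ, Fin.forall_fin_succ, Fin.forall_fin_succ]
  simp [ex]

lemma ex_inj (a b c a' b' c' : ℕ) : ex a b c = ex a' b' c' ↔ a = a' ∧ b = b' ∧ c = c' := by
  constructor
  · intro h
    have h0 := DFunLike.congr_fun h 0
    have h1 := DFunLike.congr_fun h 1
    have h2 := DFunLike.congr_fun h 2
    rw [ex_apply_zero, ex_apply_zero] at h0
    rw [ex_apply_one, ex_apply_one] at h1
    rw [ex_apply_two, ex_apply_two] at h2
    exact ⟨h0, h1, h2⟩
  · rintro ⟨rfl, rfl, rfl⟩; rfl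

lemma mono_eq (k : Type*) [Field k] (a b c : ℕ) :
    mono k a b c = xx k ^ a * yy k ^ b * zz k ^ c := by
  simp only [mono, ex, xx, yy, zz, MvPowerSeries.X_pow_eq, MvPowerSeries.monomial_mul_monomial,
    one_mul]

lemma mono_mul (k : Type*) [Field k] (a b c a' b' c' : ℕ) :
    mono k a b c * mono k a' b' c' = mono k (a + a') (b + b') (c + c') := by
  simp only [mono, MvPowerSeries.monomial_mul_monomial, one_mul, ex_add]

lemma coeff_mono (k : Type*) [Field k] (a b c a' b' c' : ℕ) :
    MvPowerSeries.coeff (ex a b c) (mono k a' b' c') =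
      if a = a' ∧ b = b' ∧ c = c' then 1 else 0 := by
  classical
  simp only [mono, MvPowerSeries.coeff_monomial, ex_inj]

lemma coeff_mul_mono_eq_zero (k : Type*) [Field k] (a b c a' b' c' : ℕ)
    (h : ¬ (a' ≤ a ∧ b' ≤ b ∧ c' ≤ c)) (f : MvPowerSeries (Fin 3) k) :
    MvPowerSeries.coeff (ex a b c) (f * mono k a' b' c') = 0 := by
  classical
  rw [mono, MvPowerSeries.coeff_mul_monomial, if_neg (by rwa [ex_le])]

lemma coeff_mul_mono (k : Type*) [Field k] (a b c a' b' c' : ℕ) (f : MvPowerSeries (Fin 3) k) :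
    MvPowerSeries.coeff (ex (a + a') (b + b') (c + c')) (f * mono k a' b' c') =
      MvPowerSeries.coeff (ex a b c) f := by
  classical
  rw [mono, ← ex_add, MvPowerSeries.coeff_add_mul_monomial, mul_one]

/-! ### Functionals vanishing on the ideal -/

/-- `𝔟₄` in terms of monomials. -/
lemma Ib4_eq (k : Type*) [Field k] : Ib4 k = Ideal.span {mono k 3 0 0, mono k 2 1 0, mono k 0 1 2,
    mono k 0 0 3, mono k 1 1 1, mono k 1 2 0 - mono k 0 3 0, mono k 0 2 1} := by
  simp only [Ib4, mono_eq, pow_zero, pow_one, mul_one, one_mul]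

/-- Coefficient functionals vanishing on `𝔟₄`: one for each monomial of the basis of `Q/𝔟₄`,
where the classes of `xy²` and `y³` agree and so their coefficients are added. -/
lemma coeff_of_mem (k : Type*) [Field k] {f : MvPowerSeries (Fin 3) k} (hf : f ∈ Ib4 k) :
    (∀ a ≤ 2, ∀ c ≤ 2, MvPowerSeries.coeff (ex a 0 c) f = 0) ∧
    MvPowerSeries.coeff (ex 0 1 0) f = 0 ∧ MvPowerSeries.coeff (ex 1 1 0) f = 0 ∧
    MvPowerSeries.coeff (ex 0 2 0) f = 0 ∧ MvPowerSeries.coeff (ex 0 1 1) f = 0 ∧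
    MvPowerSeries.coeff (ex 1 2 0) f + MvPowerSeries.coeff (ex 0 3 0) f = 0 := by
  rw [Ib4_eq] at hf
  simp only [Ideal.mem_span_insert, Ideal.mem_span_singleton'] at hf
  obtain ⟨g1, _, ⟨g2, _, ⟨g3, _, ⟨g4, _, ⟨g5, _, ⟨g6, _, ⟨g7, rfl⟩, rfl⟩, rfl⟩, rfl⟩, rfl⟩, rfl⟩,
    rfl⟩ := hf
  have h1 := coeff_mul_mono k 0 0 0 1 2 0 g6
  have h2 := coeff_mul_mono k 0 0 0 0 3 0 g6
  simp only [zero_add] at h1 h2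
  refine ⟨fun a ha c hc => ?_, ?_, ?_, ?_, ?_, ?_⟩ <;> simp only [map_add, mul_sub, map_sub]
  any_goals
    simp (disch := omega) only [coeff_mul_mono_eq_zero, add_zero, sub_zero]
  simp only [zero_add, zero_sub]
  rw [h1, h2, add_neg_cancel]

/-! ### Monomials spanning the quotient -/

/-- Every power series is a constant plus an element of `(x, y, z)`. -/
lemma exists_decomp (k : Type*) [Field k] (f : MvPowerSeries (Fin 3) k) :
    ∃ (r : k) (a b c : MvPowerSeries (Fin 3) k),
      f = r • mono k 0 0 0 + mono k 1 0 0 * a + mono k 0 1 0 * b + mono k 0 0 1 * c := by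
  classical
  -- `g0` keeps the terms of `f` free of `x`, and `g1` those free of `x` and `y`.
  let g0 : MvPowerSeries (Fin 3) k := fun n => if n 0 = 0 then f n else 0
  let g1 : MvPowerSeries (Fin 3) k := fun n => if n 0 = 0 ∧ n 1 = 0 then f n else 0
  have e0 : ∀ n, MvPowerSeries.coeff n g0 = if n 0 = 0 then MvPowerSeries.coeff n f else 0 :=
    fun n => rfl
  have e1 : ∀ n, MvPowerSeries.coeff n g1 =
      if n 0 = 0 ∧ n 1 = 0 then MvPowerSeries.coeff n f else 0 := fun n => rfl
  have d0 : (MvPowerSeries.X 0 : MvPowerSeries (Fin 3) k) ∣ f - g0 := by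
    rw [MvPowerSeries.X_dvd_iff]; intro m hm
    rw [map_sub, e0, if_pos hm, sub_self]
  have d1 : (MvPowerSeries.X 1 : MvPowerSeries (Fin 3) k) ∣ g0 - g1 := by
    rw [MvPowerSeries.X_dvd_iff]; intro m hm
    rw [map_sub, e0, e1]
    simp [hm]
  have d2 : (MvPowerSeries.X 2 : MvPowerSeries (Fin 3) k) ∣
      g1 - MvPowerSeries.coeff 0 f • 1 := by
    rw [MvPowerSeries.X_dvd_iff]; intro m hm
    rw [map_sub, e1, MvPowerSeries.coeff_smul, MvPowerSeries.coeff_one]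
    by_cases h : m = 0
    · subst h; simp
    · have : ¬ (m 0 = 0 ∧ m 1 = 0) := fun h' => h (by ext i; fin_cases i <;> simp [h', hm])
      simp [h, this]
  obtain ⟨a, ha⟩ := d0
  obtain ⟨b, hb⟩ := d1
  obtain ⟨c, hc⟩ := d2
  refine ⟨MvPowerSeries.coeff 0 f, a, b, c, ?_⟩
  simp only [mono_eq, pow_zero, pow_one, mul_one, one_mul, xx, yy, zz]
  linear_combination ha + hb + hc

/-- The monomials whose classes form a basis of `Q/𝔟₄`. -/
def stdMono (k : Type*) [Field k] : Fin 14 → MvPowerSeries (Fin 3) k :=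
  ![mono k 0 0 0, mono k 1 0 0, mono k 2 0 0, mono k 0 0 1, mono k 1 0 1, mono k 2 0 1,
    mono k 0 0 2, mono k 1 0 2, mono k 2 0 2, mono k 0 1 0, mono k 1 1 0, mono k 0 2 0,
    mono k 0 1 1, mono k 1 2 0]

/-- The monomials divisible by one of the six monomial generators lie in `𝔟₄`. -/
lemma mono_mem_Ib4 (k : Type*) [Field k] {a b c : ℕ}
    (h : 3 ≤ a ∨ 3 ≤ c ∨ 2 ≤ a ∧ 1 ≤ b ∨ 1 ≤ b ∧ 2 ≤ c ∨ 1 ≤ a ∧ 1 ≤ b ∧ 1 ≤ c ∨ 2 ≤ b ∧ 1 ≤ c) :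
    mono k a b c ∈ Ib4 k := by
  have key : ∀ a' b' c', mono k a' b' c' ∈ Ib4 k → a' ≤ a → b' ≤ b → c' ≤ c →
      mono k a b c ∈ Ib4 k := by
    intro a' b' c' h ha hb hc
    have := (Ib4 k).mul_mem_left (mono k (a - a') (b - b') (c - c')) h
    rwa [mono_mul, Nat.sub_add_cancel ha, Nat.sub_add_cancel hb, Nat.sub_add_cancel hc] at this
  rcases h with h | h | h | h | h | h
  · exact key 3 0 0 (by rw [Ib4_eq]; exact Ideal.subset_span (by simp)) (by omega) (by omega)
      (by omega)
  · exact key 0 0 3 (by rw [Ib4_eq]; exact Ideal.subset_span (by simp)) (by omega) (by omega)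
      (by omega)
  · exact key 2 1 0 (by rw [Ib4_eq]; exact Ideal.subset_span (by simp)) (by omega) (by omega)
      (by omega)
  · exact key 0 1 2 (by rw [Ib4_eq]; exact Ideal.subset_span (by simp)) (by omega) (by omega)
      (by omega)
  · exact key 1 1 1 (by rw [Ib4_eq]; exact Ideal.subset_span (by simp)) (by omega) (by omega)
      (by omega)
  · exact key 0 2 1 (by rw [Ib4_eq]; exact Ideal.subset_span (by simp)) (by omega) (by omega) (by omega)

lemma mono_sub_mem_Ib4 (k : Type*) [Field k] : mono k 1 2 0 - mono k 0 3 0 ∈ Ib4 k := by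
  rw [Ib4_eq]; exact Ideal.subset_span (by simp)

lemma mono_one_three_mem_Ib4 (k : Type*) [Field k] : mono k 1 3 0 ∈ Ib4 k := by
  -- `xy³ = x²y² - x(xy² - y³)`
  have h1 := (Ib4 k).mul_mem_left (mono k 1 0 0) (mono_sub_mem_Ib4 k)
  have h2 : mono k 2 2 0 ∈ Ib4 k := mono_mem_Ib4 k (by omega)
  rw [mul_sub, mono_mul, mono_mul] at h1
  simpa using (Ib4 k).sub_mem h2 h1

/-- The standard monomials span `Q` over `k` modulo `𝔟₄`. No completeness argument is needed:
writing `m * f = r • m + (m * x) * a + (m * y) * b + (m * z) * c`, one descends from the large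
monomials `m` to `m = 1`. -/
lemma exists_std (k : Type*) [Field k] (f : MvPowerSeries (Fin 3) k) :
    ∃ c : Fin 14 → k, f - ∑ i, c i • stdMono k i ∈ Ib4 k := by
  let S : Submodule k (MvPowerSeries (Fin 3) k) :=
    (Ib4 k).restrictScalars k ⊔ Submodule.span k (Set.range (stdMono k))
  have hI : ∀ g ∈ Ib4 k, g ∈ S := fun g hg => (le_sup_left : _ ≤ S) hg
  have hstd : ∀ i, stdMono k i ∈ S := fun i =>
    (le_sup_right : _ ≤ S) (Submodule.subset_span ⟨i, rfl⟩)
  have step : ∀ a b c : ℕ, mono k a b c ∈ S → (∀ g, mono k (a + 1) b c * g ∈ S) →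
      (∀ g, mono k a (b + 1) c * g ∈ S) → (∀ g, mono k a b (c + 1) * g ∈ S) →
      ∀ g, mono k a b c * g ∈ S := by
    intro a b c h hx hy hz g
    obtain ⟨r, p, q, s, rfl⟩ := exists_decomp k g
    simp only [mul_add, mul_smul_comm, ← mul_assoc, mono_mul, add_zero]
    exact S.add_mem (S.add_mem (S.add_mem (S.smul_mem _ h) (hx _)) (hy _)) (hz _)
  have bad : ∀ {a b c : ℕ}, (3 ≤ a ∨ 3 ≤ c ∨ 2 ≤ a ∧ 1 ≤ b ∨ 1 ≤ b ∧ 2 ≤ c ∨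
      1 ≤ a ∧ 1 ≤ b ∧ 1 ≤ c ∨ 2 ≤ b ∧ 1 ≤ c) → ∀ g, mono k a b c * g ∈ S :=
    fun h g => hI _ ((Ib4 k).mul_mem_right _ (mono_mem_Ib4 k h))
  have h202 := step 2 0 2 (hstd 8) (bad (by omega)) (bad (by omega)) (bad (by omega))
  have h102 := step 1 0 2 (hstd 7) h202 (bad (by omega)) (bad (by omega))
  have h002 := step 0 0 2 (hstd 6) h102 (bad (by omega)) (bad (by omega))
  have h201 := step 2 0 1 (hstd 5) (bad (by omega)) (bad (by omega)) h202
  have h101 := step 1 0 1 (hstd 4) h201 (bad (by omega)) h102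
  have h011 := step 0 1 1 (hstd 12) (bad (by omega)) (bad (by omega)) (bad (by omega))
  have h001 := step 0 0 1 (hstd 3) h101 h011 h002
  have h120 := step 1 2 0 (hstd 13) (bad (by omega))
    (fun g => hI _ ((Ib4 k).mul_mem_right _ (mono_one_three_mem_Ib4 k))) (bad (by omega))
  have h030 : ∀ g, mono k 0 3 0 * g ∈ S := by
    intro g
    have := S.sub_mem (h120 g) (hI _ ((Ib4 k).mul_mem_right g (mono_sub_mem_Ib4 k)))
    rwa [sub_mul, sub_sub_cancel] at this
  have h020 := step 0 2 0 (hstd 11) h120 h030 (bad (by omega))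
  have h110 := step 1 1 0 (hstd 10) (bad (by omega)) h120 (bad (by omega))
  have h010 := step 0 1 0 (hstd 9) h110 h020 h011
  have h200 := step 2 0 0 (hstd 2) (bad (by omega)) (bad (by omega)) h201
  have h100 := step 1 0 0 (hstd 1) h200 h110 h101
  have h000 := step 0 0 0 (hstd 0) h100 h010 h001
  have hf : f ∈ S := by simpa [mono_eq] using h000 f
  obtain ⟨u, hu, v, hv, rfl⟩ := Submodule.mem_sup.1 hf
  obtain ⟨c, rfl⟩ := (Submodule.mem_span_range_iff_exists_fun k).1 hv
  exact ⟨c, by simpa using hu⟩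

/-! ### The socle -/

/-- A power series multiplied into `𝔟₄` by each variable is congruent to a `k`-combination of
`x²z²`, `xy²` and `yz`. -/
lemma exists_of_socle (k : Type*) [Field k] (f : MvPowerSeries (Fin 3) k)
    (hx : mono k 1 0 0 * f ∈ Ib4 k) (hy : mono k 0 1 0 * f ∈ Ib4 k)
    (hz : mono k 0 0 1 * f ∈ Ib4 k) :
    ∃ r s t : k, f - (r • mono k 2 0 2 + s • mono k 1 2 0 + t • mono k 0 1 1) ∈ Ib4 k := by
  obtain ⟨c, hc⟩ := exists_std k f
  have red : ∀ m, m * f ∈ Ib4 k → m * ∑ i, c i • stdMono k i ∈ Ib4 k := by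
    intro m hm
    have := (Ib4 k).sub_mem hm ((Ib4 k).mul_mem_left m hc)
    rwa [mul_sub, sub_sub_cancel] at this
  -- Compare the coefficients of `x * p`, `y * p`, `z * p`, where `p` is the representative of `f`.
  obtain ⟨x1, x2, x3, x4, x5, x6⟩ := coeff_of_mem k (red _ hx)
  obtain ⟨y1, y2, y3, y4, y5, y6⟩ := coeff_of_mem k (red _ hy)
  obtain ⟨z1, z2, z3, z4, z5, z6⟩ := coeff_of_mem k (red _ hz)
  have x100 := x1 1 (by omega) 0 (by omega)
  have x200 := x1 2 (by omega) 0 (by omega)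
  have x101 := x1 1 (by omega) 1 (by omega)
  have x201 := x1 2 (by omega) 1 (by omega)
  have x102 := x1 1 (by omega) 2 (by omega)
  have x202 := x1 2 (by omega) 2 (by omega)
  have z201 := z1 2 (by omega) 1 (by omega)
  have z202 := z1 2 (by omega) 2 (by omega)
  clear x1 y1 z1
  simp [Fin.sum_univ_succ, stdMono, mul_add, mono_mul, coeff_mono] at *
  refine ⟨c 8, c 13, c 12, ?_⟩
  have c10 : c 10 = 0 := by rwa [x6, add_zero] at y6
  simp only [x3, x6, c10, x100, x200, x101, x201, x102, x202, z201, z202, zero_smul, zero_add] at hc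
  convert hc using 2
  abel

lemma std_socle_indep (k : Type*) [Field k] (r s t : k)
    (h : r • mono k 2 0 2 + s • mono k 1 2 0 + t • mono k 0 1 1 ∈ Ib4 k) :
    r = 0 ∧ s = 0 ∧ t = 0 := by
  obtain ⟨h1, -, -, -, h5, h6⟩ := coeff_of_mem k h
  have h1 := h1 2 (by omega) 2 (by omega)
  simp [coeff_mono] at h1 h5 h6
  exact ⟨h1, h6, h5⟩

/-- The socle `(0 :_R m)` of `R = Q/b4`. -/
theorem socle_b4 (k : Type*) [Field k] :
    (⊥ : Ideal (MvPowerSeries (Fin 3) k ⧸ Ib4 k)).colon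
        (Ideal.map (Ideal.Quotient.mk (Ib4 k)) (Ideal.span {xx k, yy k, zz k}))
      = Ideal.span {Ideal.Quotient.mk (Ib4 k) (xx k ^ 2 * zz k ^ 2), Ideal.Quotient.mk (Ib4 k) (xx k * yy k ^ 2), Ideal.Quotient.mk (Ib4 k) (yy k * zz k)} ∧
    Module.finrank k (Submodule.restrictScalars k
      ((⊥ : Ideal (MvPowerSeries (Fin 3) k ⧸ Ib4 k)).colon
        (Ideal.map (Ideal.Quotient.mk (Ib4 k)) (Ideal.span {xx k, yy k, zz k})))) = 3 := by
  set mk := Ideal.Quotient.mk (Ib4 k) with hmk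
  have ex1 : xx k = mono k 1 0 0 := by simp [mono_eq]
  have ey1 : yy k = mono k 0 1 0 := by simp [mono_eq]
  have ez1 : zz k = mono k 0 0 1 := by simp [mono_eq]
  have e1 : xx k ^ 2 * zz k ^ 2 = mono k 2 0 2 := by simp [mono_eq]
  have e2 : xx k * yy k ^ 2 = mono k 1 2 0 := by simp [mono_eq]
  have e3 : yy k * zz k = mono k 0 1 1 := by simp [mono_eq]
  rw [e1, e2, e3]
  set J := (⊥ : Ideal (MvPowerSeries (Fin 3) k ⧸ Ib4 k)).colon
        (Ideal.map mk (Ideal.span {xx k, yy k, zz k})) with hJ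
  have hmem : ∀ f, mk f ∈ J ↔ mono k 1 0 0 * f ∈ Ib4 k ∧ mono k 0 1 0 * f ∈ Ib4 k ∧
      mono k 0 0 1 * f ∈ Ib4 k := by
    intro f
    rw [hJ, Ideal.map_span, Submodule.mem_colon]
    have key : (∀ s ∈ Ideal.span (mk '' {xx k, yy k, zz k}), mk f • s ∈ (⊥ : Ideal _)) ↔
        ∀ s ∈ mk '' {xx k, yy k, zz k}, mk f * s = 0 := by
      constructor
      · exact fun h s hs => h s (Ideal.subset_span hs)
      · intro h s hs
        refine Submodule.span_induction (p := fun s _ => mk f • s ∈ (⊥ : Ideal _)) ?_ ?_ ?_ ?_ hs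
        · exact fun s hs => h s hs
        · simp
        · intro a b _ _ ha hb
          rw [smul_add]; exact add_mem ha hb
        · intro a b _ hb
          rw [smul_comm]; exact Submodule.smul_mem _ _ hb
    refine key.trans ?_
    simp only [Set.forall_mem_image, Set.mem_insert_iff, Set.mem_singleton_iff, forall_eq_or_imp,
      forall_eq, ← map_mul, hmk, Ideal.Quotient.eq_zero_iff_mem, ex1, ey1, ez1, mul_comm f]
  -- The three classes whose `k`-span is shown to be the socle.
  let v : Fin 3 → MvPowerSeries (Fin 3) k ⧸ Ib4 k :=
    ![mk (mono k 2 0 2), mk (mono k 1 2 0), mk (mono k 0 1 1)]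
  have hcomb : ∀ r s t : k, mk (r • mono k 2 0 2 + s • mono k 1 2 0 + t • mono k 0 1 1) =
      r • mk (mono k 2 0 2) + s • mk (mono k 1 2 0) + t • mk (mono k 0 1 1) := by
    intro r s t
    rw [map_add, map_add]
    rfl
  have hgen : ∀ i, v i ∈ J := by
    intro i
    fin_cases i
    · refine (hmem _).2 ⟨?_, ?_, ?_⟩ <;> rw [mono_mul] <;> exact mono_mem_Ib4 k (by omega)
    · refine (hmem _).2 ⟨?_, ?_, ?_⟩ <;> rw [mono_mul]
      · exact mono_mem_Ib4 k (by omega)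
      · exact mono_one_three_mem_Ib4 k
      · exact mono_mem_Ib4 k (by omega)
    · refine (hmem _).2 ⟨?_, ?_, ?_⟩ <;> rw [mono_mul] <;> exact mono_mem_Ib4 k (by omega)
  have hspan : ∀ g ∈ J, ∃ r s t : k,
      g = r • mk (mono k 2 0 2) + s • mk (mono k 1 2 0) + t • mk (mono k 0 1 1) := by
    intro g hg
    obtain ⟨f, rfl⟩ := Ideal.Quotient.mk_surjective g
    obtain ⟨hx, hy, hz⟩ := (hmem f).1 hg
    obtain ⟨r, s, t, h⟩ := exists_of_socle k f hx hy hz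
    exact ⟨r, s, t, by rw [← hcomb]; exact Ideal.Quotient.eq.2 h⟩
  refine ⟨le_antisymm ?_ ?_, ?_⟩
  · intro g hg
    obtain ⟨r, s, t, rfl⟩ := hspan g hg
    rw [← hcomb]
    simp only [MvPowerSeries.smul_eq_C_mul, map_add, map_mul]
    refine add_mem (add_mem ?_ ?_) ?_ <;>
      exact Ideal.mul_mem_left _ _ (Ideal.subset_span (by simp))
  · rw [Ideal.span_le]
    rintro _ (rfl | rfl | rfl)
    · exact hgen 0
    · exact hgen 1
    · exact hgen 2
  · have hli : LinearIndependent k v := by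
      rw [Fintype.linearIndependent_iff]
      intro g hg
      rw [Fin.sum_univ_three] at hg
      obtain ⟨h0, h1, h2⟩ := std_socle_indep k (g 0) (g 1) (g 2)
        (Ideal.Quotient.eq_zero_iff_mem.1 ((hcomb _ _ _).trans hg))
      intro i
      fin_cases i
      exacts [h0, h1, h2]
    have hJv : J.restrictScalars k = Submodule.span k (Set.range v) := by
      apply le_antisymm
      · intro g hg
        obtain ⟨r, s, t, rfl⟩ := hspan g hg
        exact add_mem (add_mem
          (Submodule.smul_mem _ _ (Submodule.subset_span ⟨0, rfl⟩))
          (Submodule.smul_mem _ _ (Submodule.subset_span ⟨1, rfl⟩)))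
          (Submodule.smul_mem _ _ (Submodule.subset_span ⟨2, rfl⟩))
      · rw [Submodule.span_le]
        rintro _ ⟨i, rfl⟩
        exact hgen i
    rw [hJv, finrank_span_eq_card hli, Fintype.card_fin]
end
end

section
/- The ideal 𝔤₂ = (xy², xyz, yz², x⁴ − y³z, xz³ − y⁴, x³y − z⁴) of Q is minimally generated by 6 elements; equivalently, the k-vector space 𝔤₂/(𝔪_Q·𝔤₂) has dimension 6. -/
/-!
The proof exhibits six `k`-linear functionals on `Q` that form a dual basis of `g2 / (m_Q * g2)`.
They are the coefficients of `xy², xyz, yz², x⁴, y⁴, z⁴`. The first three monomials occur in exactly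
one cubic generator each; the last three occur, with coefficient `±1`, in exactly one quartic
generator each. None of the six is divisible by any other monomial in the generators. Consequently the
vector of functionals `coeffs` sends `∑ cᵢ gᵢ` to the vector of constant terms of the `cᵢ`, up to
signs in the last two places (`coeffs_comb`). So `coeffs` kills `m_Q * g2`, maps `g2` onto `k⁶`, and
its kernel on `g2` is `m_Q * g2`, because a power series without constant term lies in `(x, y, z)`
(`mem_maxIdeal`). The induced map `g2 / (m_Q * g2) → k⁶` is therefore bijective.
-/


/-!
STATEMENT 9: The ideal `g2` of `Q = k[[x,y,z]]` is minimally generated by 6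
elements; equivalently (by Nakayama), the `k`-vector space `g2/(m_Q * g2)` has
dimension 6, where `m_Q = (x,y,z)`. The quotient `g2/(m_Q*g2)` is realized as the
image of `g2` in `Q/(m_Q*g2)` (as `k`-vector spaces).

Here `Q = k[[x,y,z]]` is formalized as `MvPowerSeries (Fin 3) k` with
`x = X 0`, `y = X 1`, `z = X 2`.
-/

noncomputable section

namespace MuG2

open MvPowerSeries

/-- The exponent vector of the monomial `x ^ a * y ^ b * z ^ c`. -/
def expo (a b c : ℕ) : Fin 3 →₀ ℕ :=
  Finsupp.single 0 a + Finsupp.single 1 b + Finsupp.single 2 c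

lemma monomial_expo (k : Type*) [Field k] (a b c : ℕ) :
    xx k ^ a * yy k ^ b * zz k ^ c = monomial (expo a b c) 1 := by
  simp only [xx, yy, zz, X_pow_eq, monomial_mul_monomial, one_mul, expo]

lemma coeff_mul_expo {k : Type*} [Field k] (f : MvPowerSeries (Fin 3) k) (a b c a' b' c' : ℕ) :
    coeff (expo a b c) (f * (xx k ^ a' * yy k ^ b' * zz k ^ c')) =
      if a' ≤ a ∧ b' ≤ b ∧ c' ≤ c then coeff (expo (a - a') (b - b') (c - c')) f else 0 := by
  have h1 : expo a' b' c' ≤ expo a b c ↔ a' ≤ a ∧ b' ≤ b ∧ c' ≤ c := by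
    simp [Finsupp.le_def, Fin.forall_fin_succ, expo, Finsupp.single_apply]
  have h2 : expo a b c - expo a' b' c' = expo (a - a') (b - b') (c - c') := by
    ext i
    fin_cases i <;> simp [expo]
  rw [monomial_expo, coeff_mul_monomial]
  simp only [h1, h2, mul_one]

lemma expo_zero : expo 0 0 0 = 0 := by simp [expo]

/-- The linear combination of the six generators of `g2` with coefficients `c`. -/
def comb {k : Type*} [Field k] (c : Fin 6 → MvPowerSeries (Fin 3) k) : MvPowerSeries (Fin 3) k :=
  c 0 * (xx k * yy k ^ 2) + c 1 * (xx k * yy k * zz k) + c 2 * (yy k * zz k ^ 2)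
    + c 3 * (xx k ^ 4 - yy k ^ 3 * zz k) + c 4 * (xx k * zz k ^ 3 - yy k ^ 4)
    + c 5 * (xx k ^ 3 * yy k - zz k ^ 4)

lemma mem_Ig2 {k : Type*} [Field k] {f : MvPowerSeries (Fin 3) k} :
    f ∈ Ig2 k ↔ ∃ c, f = comb c := by
  constructor
  · intro h
    simp only [Ig2, Ideal.mem_span_insert, Ideal.mem_span_singleton'] at h
    obtain ⟨c0, _, ⟨c1, _, ⟨c2, _, ⟨c3, _, ⟨c4, _, ⟨c5, rfl⟩, rfl⟩, rfl⟩, rfl⟩, rfl⟩, rfl⟩ := h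
    refine ⟨![c0, c1, c2, c3, c4, c5], ?_⟩
    simp only [comb, Matrix.cons_val]
    ring
  · rintro ⟨c, rfl⟩
    unfold comb Ig2
    refine add_mem (add_mem (add_mem (add_mem (add_mem ?_ ?_) ?_) ?_) ?_) ?_ <;>
      exact Ideal.mul_mem_left _ _ (Ideal.subset_span (by simp))

lemma mem_maxIdeal {k : Type*} [Field k] {f : MvPowerSeries (Fin 3) k} (hf : coeff 0 f = 0) :
    f ∈ Ideal.span {xx k, yy k, zz k} := by
  -- The terms divisible by `x`, those in `y, z` divisible by `y`, and those in `z` alone.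
  let A : MvPowerSeries (Fin 3) k := fun m => if m 0 = 0 then 0 else coeff m f
  let B : MvPowerSeries (Fin 3) k := fun m => if m 0 = 0 ∧ m 1 ≠ 0 then coeff m f else 0
  let D : MvPowerSeries (Fin 3) k := fun m => if m 0 = 0 ∧ m 1 = 0 then coeff m f else 0
  have hA (m) : coeff m A = if m 0 = 0 then 0 else coeff m f := rfl
  have hB (m) : coeff m B = if m 0 = 0 ∧ m 1 ≠ 0 then coeff m f else 0 := rfl
  have hD (m) : coeff m D = if m 0 = 0 ∧ m 1 = 0 then coeff m f else 0 := rfl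
  have hsum : f = A + B + D := by
    ext m
    rw [map_add, map_add, hA, hB, hD]
    by_cases h0 : m 0 = 0 <;> by_cases h1 : m 1 = 0 <;> simp [h0, h1]
  have dA : xx k ∣ A := X_dvd_iff.2 fun m hm => by rw [hA, if_pos hm]
  have dB : yy k ∣ B := X_dvd_iff.2 fun m hm => by rw [hB, if_neg (by simp [hm])]
  have dD : zz k ∣ D := X_dvd_iff.2 fun m hm => by
    rw [hD]
    split_ifs with h
    · have : m = 0 := by
        ext i
        fin_cases i
        exacts [h.1, h.2, hm]
      rw [this, hf]
    · rfl
  rw [hsum]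
  exact add_mem (add_mem (Ideal.mem_of_dvd _ dA (Ideal.subset_span (by simp)))
    (Ideal.mem_of_dvd _ dB (Ideal.subset_span (by simp))))
    (Ideal.mem_of_dvd _ dD (Ideal.subset_span (by simp)))

/-- The coefficients of `xy², xyz, yz², x⁴, y⁴, z⁴`. -/
def coeffs (k : Type*) [Field k] : MvPowerSeries (Fin 3) k →ₗ[k] (Fin 6 → k) :=
  LinearMap.pi ![coeff (expo 1 2 0), coeff (expo 1 1 1), coeff (expo 0 1 2),
    coeff (expo 4 0 0), coeff (expo 0 4 0), coeff (expo 0 0 4)]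

lemma coeffs_apply {k : Type*} [Field k] (f : MvPowerSeries (Fin 3) k) :
    coeffs k f = ![coeff (expo 1 2 0) f, coeff (expo 1 1 1) f, coeff (expo 0 1 2) f,
      coeff (expo 4 0 0) f, coeff (expo 0 4 0) f, coeff (expo 0 0 4) f] := by
  ext i
  fin_cases i <;> rfl

lemma coeffs_comb {k : Type*} [Field k] (c : Fin 6 → MvPowerSeries (Fin 3) k) :
    coeffs k (comb c) = ![coeff 0 (c 0), coeff 0 (c 1), coeff 0 (c 2), coeff 0 (c 3),
      -coeff 0 (c 4), -coeff 0 (c 5)] := by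
  have hc : comb c = c 0 * (xx k ^ 1 * yy k ^ 2 * zz k ^ 0) + c 1 * (xx k ^ 1 * yy k ^ 1 * zz k ^ 1)
      + c 2 * (xx k ^ 0 * yy k ^ 1 * zz k ^ 2)
      + (c 3 * (xx k ^ 4 * yy k ^ 0 * zz k ^ 0) - c 3 * (xx k ^ 0 * yy k ^ 3 * zz k ^ 1))
      + (c 4 * (xx k ^ 1 * yy k ^ 0 * zz k ^ 3) - c 4 * (xx k ^ 0 * yy k ^ 4 * zz k ^ 0))
      + (c 5 * (xx k ^ 3 * yy k ^ 1 * zz k ^ 0) - c 5 * (xx k ^ 0 * yy k ^ 0 * zz k ^ 4)) := by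
    unfold comb
    ring
  -- `coeff_mul_expo` must fire before `simp` normalises the exponents `0` and `1` away.
  rw [coeffs_apply, hc]
  simp only [map_add, map_sub, coeff_mul_expo]
  simp [expo_zero]

lemma coeffs_eq_zero {k : Type*} [Field k] {f : MvPowerSeries (Fin 3) k}
    (hf : f ∈ Ideal.span {xx k, yy k, zz k} * Ig2 k) : coeffs k f = 0 := by
  induction hf using Submodule.mul_induction_on' with
  | mem_mul_mem r hr s hs =>
    obtain ⟨c, rfl⟩ := mem_Ig2.1 hs
    have hr0 : constantCoeff r = 0 := by
      have : Ideal.span {xx k, yy k, zz k} ≤ RingHom.ker (constantCoeff (σ := Fin 3) (R := k)) := by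
        rw [Ideal.span_le]
        rintro _ (rfl | rfl | rfl) <;> simp [xx, yy, zz, RingHom.mem_ker]
      exact this hr
    have : r * comb c = comb (fun i => r * c i) := by
      simp only [comb]
      ring
    rw [this, coeffs_comb]
    ext i
    fin_cases i <;> simp [hr0]
  | add f _ g _ hf hg => rw [map_add, hf, hg, add_zero]

lemma mem_mul_of_coeffs_eq_zero {k : Type*} [Field k] {f : MvPowerSeries (Fin 3) k}
    (hf : f ∈ Ig2 k) (h0 : coeffs k f = 0) : f ∈ Ideal.span {xx k, yy k, zz k} * Ig2 k := by
  obtain ⟨c, rfl⟩ := mem_Ig2.1 hf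
  rw [coeffs_comb] at h0
  have hm (i) : c i ∈ Ideal.span {xx k, yy k, zz k} := by
    apply mem_maxIdeal
    have := congrFun h0 i
    fin_cases i <;> simpa using this
  unfold comb Ig2
  refine add_mem (add_mem (add_mem (add_mem (add_mem ?_ ?_) ?_) ?_) ?_) ?_ <;>
    exact Ideal.mul_mem_mul (hm _) (Ideal.subset_span (by simp))

lemma exists_coeffs_eq {k : Type*} [Field k] (v : Fin 6 → k) : ∃ f ∈ Ig2 k, coeffs k f = v := by
  refine ⟨_, mem_Ig2.2 ⟨![C (v 0), C (v 1), C (v 2), C (v 3), -C (v 4), -C (v 5)], rfl⟩, ?_⟩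
  rw [coeffs_comb]
  ext i
  fin_cases i <;> simp

end MuG2

theorem mu_g2 (k : Type*) [Field k] :
    Module.finrank k
      (Submodule.map
        (Submodule.restrictScalars k (Ideal.span {xx k, yy k, zz k} * Ig2 k)).mkQ
        (Submodule.restrictScalars k (Ig2 k))) = 6 := by
  set N := Submodule.restrictScalars k (Ideal.span {xx k, yy k, zz k} * Ig2 k)
  set I := Submodule.restrictScalars k (Ig2 k)
  let F : _ →ₗ[k] (Fin 6 → k) :=
    (N.liftQ (MuG2.coeffs k) fun _ hf => MuG2.coeffs_eq_zero hf).domRestrict (I.map N.mkQ)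
  have hF : Function.Bijective F := by
    constructor
    · rw [injective_iff_map_eq_zero]
      rintro ⟨_, f, hf, rfl⟩ h
      rw [Subtype.ext_iff]
      exact (Submodule.Quotient.mk_eq_zero N).2 (MuG2.mem_mul_of_coeffs_eq_zero hf h)
    · intro v
      obtain ⟨f, hf, hv⟩ := MuG2.exists_coeffs_eq v
      exact ⟨⟨N.mkQ f, f, hf, rfl⟩, hv⟩
  rw [(LinearEquiv.ofBijective F hF).finrank_eq, Module.finrank_fin_fun]
end
end

section
/- The ideal 𝔤₄ = (xy², xyz, yz², x⁴ − y³z, xz³ − y⁴, x³y − z⁴, x²z², x³z) of Q is minimally generated by 8 elements; equivalently, the k-vector space 𝔤₄/(𝔪_Q·𝔤₄) has dimension 8. -/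
/-!
STATEMENT 11: The ideal `g4` of `Q = k[[x,y,z]]` is minimally generated by 8
elements; equivalently (by Nakayama), the `k`-vector space `g4/(m_Q * g4)` has
dimension 8, where `m_Q = (x,y,z)`. The quotient `g4/(m_Q*g4)` is realized as the
image of `g4` in `Q/(m_Q*g4)` (as `k`-vector spaces).

Here `Q = k[[x,y,z]]` is formalized as `MvPowerSeries (Fin 3) k` with
`x = X 0`, `y = X 1`, `z = X 2`.
-/

/-!
Every generator of `g4` is homogeneous and has a leading monomial `x^a y^b z^c` (`lead`), possibly
minus one tail monomial (`tail`). Among all the monomials occurring in the eight generators, the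
only one dividing the leading monomial of the `i`-th generator is that leading monomial itself.
Hence the coefficient of the `i`-th leading monomial in `p * g j` is `p(0)` if `i = j` and `0`
otherwise (`coeff_lead_mul_gen`). The eight leading coefficients therefore vanish on `m_Q * g4` and
send `∑ j, p j * g j` to the vector `(p j (0))_j`. If that vector is zero, all `p j` lie in `m_Q`
(`mem_of_constantCoeff_eq_zero`), so the sum lies in `m_Q * g4`. The leading coefficients thus
induce an isomorphism from `g4/(m_Q * g4)` onto `k^8`.
-/

noncomputable section

/-- The ideal `g4` of the paper. -/
def Ig4 (k : Type*) [Field k] : Ideal (MvPowerSeries (Fin 3) k) :=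
  Ideal.span {xx k * yy k ^ 2, xx k * yy k * zz k, yy k * zz k ^ 2, xx k ^ 4 - yy k ^ 3 * zz k, xx k * zz k ^ 3 - yy k ^ 4, xx k ^ 3 * yy k - zz k ^ 4, xx k ^ 2 * zz k ^ 2, xx k ^ 3 * zz k}

open MvPowerSeries

/-- The exponent vectors of the leading monomials of the eight generators of `g4`. The leading
monomials of the three binomials are `x^4`, `x z^3` and `x^3 y`. -/
def lead : Fin 8 → Fin 3 → ℕ :=
  ![![1, 2, 0], ![1, 1, 1], ![0, 1, 2], ![4, 0, 0], ![1, 0, 3], ![3, 1, 0], ![2, 0, 2], ![3, 0, 1]]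

/-- The exponent vectors of the other monomials of the three binomial generators. For the five
monomial generators the value plays no role, since `tailCoeff` is `0` there; `y^3 z` is chosen
because it divides no leading monomial, which makes `not_tail_le_lead` hold uniformly. -/
def tail : Fin 8 → Fin 3 → ℕ :=
  ![![0, 3, 1], ![0, 3, 1], ![0, 3, 1], ![0, 3, 1], ![0, 4, 0], ![0, 0, 4], ![0, 3, 1], ![0, 3, 1]]

/-- The negated coefficient of the tail monomial: `1` for the three binomials, `0` otherwise. -/
def tailCoeff (k : Type*) [Field k] : Fin 8 → k := ![0, 0, 0, 1, 1, 1, 0, 0]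

/-- The monomial `x^(e 0) y^(e 1) z^(e 2)` as an exponent vector in Mathlib's form. -/
def toExp (e : Fin 3 → ℕ) : Fin 3 →₀ ℕ := Finsupp.equivFunOnFinite.symm e

/-- The eight generators of `g4`, in terms of their leading and tail monomials. -/
def gen (k : Type*) [Field k] (j : Fin 8) : MvPowerSeries (Fin 3) k :=
  monomial (toExp (lead j)) 1 - monomial (toExp (tail j)) (tailCoeff k j)

lemma lead_le_lead_iff : ∀ i j, lead j ≤ lead i ↔ i = j := by
  simp only [Pi.le_def]
  decide

lemma not_tail_le_lead : ∀ i j, ¬ tail j ≤ lead i := by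
  simp only [Pi.le_def]
  decide

lemma toExp_le_toExp (e f : Fin 3 → ℕ) : toExp e ≤ toExp f ↔ e ≤ f := Iff.rfl

lemma monomial_toExp (k : Type*) [Field k] (a b c : ℕ) :
    (monomial (toExp ![a, b, c]) (1 : k)) = xx k ^ a * yy k ^ b * zz k ^ c := by
  rw [xx, yy, zz, X_pow_eq, X_pow_eq, X_pow_eq, monomial_mul_monomial, monomial_mul_monomial]
  have h : toExp ![a, b, c] =
      Finsupp.single 0 a + Finsupp.single 1 b + Finsupp.single 2 c := by
    ext i
    fin_cases i <;> simp [toExp]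
  simp [h]

lemma Ig4_eq (k : Type*) [Field k] : Ig4 k = Ideal.span (Set.range (gen k)) := by
  have h : gen k = ![xx k * yy k ^ 2, xx k * yy k * zz k, yy k * zz k ^ 2,
      xx k ^ 4 - yy k ^ 3 * zz k, xx k * zz k ^ 3 - yy k ^ 4, xx k ^ 3 * yy k - zz k ^ 4,
      xx k ^ 2 * zz k ^ 2, xx k ^ 3 * zz k] := by
    funext j
    fin_cases j <;> simp [gen, lead, tail, tailCoeff, monomial_toExp]
  rw [h, Ig4]
  congr 1
  simp only [Matrix.range_cons, Matrix.range_empty, Set.union_empty, Set.singleton_union]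

/-- Only the constant term of `p` contributes, because the only monomial of a generator that
divides a leading monomial is that leading monomial itself. -/
lemma coeff_lead_mul_gen (k : Type*) [Field k] (p : MvPowerSeries (Fin 3) k) (i j : Fin 8) :
    coeff (toExp (lead i)) (p * gen k j) = if i = j then constantCoeff p else 0 := by
  rw [gen, mul_sub, map_sub, coeff_mul_monomial, coeff_mul_monomial,
    if_neg (show ¬ toExp (tail j) ≤ toExp (lead i) from not_tail_le_lead i j), sub_zero, mul_one]
  simp only [toExp_le_toExp, lead_le_lead_iff]
  split_ifs with h
  · subst h
    simp
  · rfl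

/-- A power series without constant term lies in `m_Q = (x, y, z)`. -/
lemma mem_of_constantCoeff_eq_zero (k : Type*) [Field k] (p : MvPowerSeries (Fin 3) k)
    (hp : constantCoeff p = 0) : p ∈ Ideal.span {xx k, yy k, zz k} := by
  -- `u` collects the terms divisible by `x`, `v` those divisible by `y` but not by `x`; the
  -- remaining terms involve only `z`.
  let u : MvPowerSeries (Fin 3) k := fun e => if e 0 = 0 then 0 else coeff e p
  let v : MvPowerSeries (Fin 3) k := fun e => if e 0 = 0 ∧ e 1 ≠ 0 then coeff e p else 0
  have hu (e) : coeff e u = if e 0 = 0 then 0 else coeff e p := rfl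
  have hv (e) : coeff e v = if e 0 = 0 ∧ e 1 ≠ 0 then coeff e p else 0 := rfl
  have hxu : xx k ∣ u := X_dvd_iff.2 fun e he => by simp [hu, he]
  have hyv : yy k ∣ v := X_dvd_iff.2 fun e he => by simp [hv, he]
  have hzw : zz k ∣ p - u - v := X_dvd_iff.2 fun e he => by
    rw [map_sub, map_sub, hu, hv]
    by_cases h0 : e 0 = 0
    · by_cases h1 : e 1 = 0
      · have h : e = 0 := by
          ext i
          fin_cases i <;> simp [h0, h1, he]
        simp [h, hp]
      · simp [h0, h1]
    · simp [h0]
  have h : p = u + v + (p - u - v) := by ring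
  rw [h]
  exact add_mem (add_mem
    (Ideal.mem_of_dvd _ hxu (Ideal.subset_span (by simp)))
    (Ideal.mem_of_dvd _ hyv (Ideal.subset_span (by simp))))
    (Ideal.mem_of_dvd _ hzw (Ideal.subset_span (by simp)))

/-- The linear map sending a power series to its eight leading coefficients. -/
def leadCoeffs (k : Type*) [Field k] : MvPowerSeries (Fin 3) k →ₗ[k] (Fin 8 → k) :=
  LinearMap.pi fun i => coeff (toExp (lead i))

lemma leadCoeffs_sum (k : Type*) [Field k] (c : Fin 8 → MvPowerSeries (Fin 3) k) :
    leadCoeffs k (∑ j, c j * gen k j) = fun i => constantCoeff (c i) := by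
  funext i
  simp [leadCoeffs, coeff_lead_mul_gen]

lemma leadCoeffs_eq_zero_of_mem (k : Type*) [Field k] (f : MvPowerSeries (Fin 3) k)
    (hf : f ∈ Ideal.span {xx k, yy k, zz k} * Ig4 k) : leadCoeffs k f = 0 := by
  refine Submodule.mul_induction_on hf (fun m hm g hg => ?_) (fun a b ha hb => by
    rw [map_add, ha, hb, add_zero])
  have hm0 : constantCoeff m = 0 := by
    have hle : Ideal.span {xx k, yy k, zz k} ≤ RingHom.ker (constantCoeff (R := k)) := by
      rw [Ideal.span_le]
      rintro _ (rfl | rfl | rfl) <;> simp [xx, yy, zz]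
    exact hle hm
  rw [Ig4_eq, Ideal.mem_span_range_iff_exists_fun] at hg
  obtain ⟨c, rfl⟩ := hg
  simp only [Finset.mul_sum, ← mul_assoc]
  rw [leadCoeffs_sum]
  funext i
  simp [hm0]

theorem mu_g4 (k : Type*) [Field k] :
    Module.finrank k
      (Submodule.map
        (Submodule.restrictScalars k (Ideal.span {xx k, yy k, zz k} * Ig4 k)).mkQ
        (Submodule.restrictScalars k (Ig4 k))) = 8 := by
  set B := Submodule.restrictScalars k (Ideal.span {xx k, yy k, zz k} * Ig4 k) with hB
  let L : (MvPowerSeries (Fin 3) k ⧸ B) →ₗ[k] (Fin 8 → k) :=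
    B.liftQ (leadCoeffs k) fun f hf => leadCoeffs_eq_zero_of_mem k f hf
  let M := Submodule.map B.mkQ (Submodule.restrictScalars k (Ig4 k))
  have hinj : Function.Injective (L.domRestrict M) := by
    rw [injective_iff_map_eq_zero]
    rintro ⟨_, f, hf, rfl⟩ h
    replace h : leadCoeffs k f = 0 := h
    have hf' : f ∈ Ig4 k := hf
    rw [Ig4_eq, Ideal.mem_span_range_iff_exists_fun] at hf'
    obtain ⟨c, rfl⟩ := hf'
    rw [leadCoeffs_sum] at h
    apply Subtype.ext
    refine (Submodule.Quotient.mk_eq_zero B).2 ?_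
    rw [hB, Submodule.restrictScalars_mem]
    refine sum_mem fun j _ => Ideal.mul_mem_mul
      (mem_of_constantCoeff_eq_zero k _ (congrFun h j)) ?_
    rw [Ig4_eq]
    exact Ideal.subset_span ⟨j, rfl⟩
  have hsurj : Function.Surjective (L.domRestrict M) := by
    intro w
    have hmem : ∑ j, C (w j) * gen k j ∈ Ig4 k := by
      rw [Ig4_eq, Ideal.mem_span_range_iff_exists_fun]
      exact ⟨fun j => C (w j), rfl⟩
    refine ⟨⟨_, _, hmem, rfl⟩, ?_⟩
    change leadCoeffs k (∑ j, C (w j) * gen k j) = w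
    rw [leadCoeffs_sum]
    simp
  rw [(LinearEquiv.ofBijective (L.domRestrict M) ⟨hinj, hsurj⟩).finrank_eq]
  simp
end
end

section
/- Let 𝔤₃ = (xy², xyz, yz², x⁴ − y³z, xz³ − y⁴, x³y − z⁴, x²z²) ⊆ Q. Then the quotient ring R = Q/𝔤₃ is a finite-dimensional k-vector space of dimension 22; more precisely, the images of the 22 monomials 1; x, y, z; x², xy, xz, y², yz, z²; x³, x²y, x²z, xz², y³, y²z, z³; x⁴, x³y, x³z, xz³; x⁴y form a k-basis of R. -/
/-!
STATEMENT 17: The quotient ring `R = Q/g3` is a finite-dimensional `k`-vector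
space of dimension 22; the images of the 22 listed monomials form a `k`-basis of
`R`, i.e. they are linearly independent over `k` and span `R`.

Here `Q = k[[x,y,z]]` is formalized as `MvPowerSeries (Fin 3) k` with
`x = X 0`, `y = X 1`, `z = X 2`.
-/

noncomputable section

/-- The ideal `g3` of the paper. -/
def Ig3 (k : Type*) [Field k] : Ideal (MvPowerSeries (Fin 3) k) :=
  Ideal.span {xx k * yy k ^ 2, xx k * yy k * zz k, yy k * zz k ^ 2, xx k ^ 4 - yy k ^ 3 * zz k, xx k * zz k ^ 3 - yy k ^ 4, xx k ^ 3 * yy k - zz k ^ 4, xx k ^ 2 * zz k ^ 2}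

/-- The family of images in `R = Q/g3` of the 22 listed monomials. -/
def mons_g3 (k : Type*) [Field k] : Fin 22 → (MvPowerSeries (Fin 3) k ⧸ Ig3 k) :=
  ![Ideal.Quotient.mk (Ig3 k) (1),
    Ideal.Quotient.mk (Ig3 k) (xx k),
    Ideal.Quotient.mk (Ig3 k) (yy k),
    Ideal.Quotient.mk (Ig3 k) (zz k),
    Ideal.Quotient.mk (Ig3 k) (xx k ^ 2),
    Ideal.Quotient.mk (Ig3 k) (xx k * yy k),
    Ideal.Quotient.mk (Ig3 k) (xx k * zz k),
    Ideal.Quotient.mk (Ig3 k) (yy k ^ 2),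
    Ideal.Quotient.mk (Ig3 k) (yy k * zz k),
    Ideal.Quotient.mk (Ig3 k) (zz k ^ 2),
    Ideal.Quotient.mk (Ig3 k) (xx k ^ 3),
    Ideal.Quotient.mk (Ig3 k) (xx k ^ 2 * yy k),
    Ideal.Quotient.mk (Ig3 k) (xx k ^ 2 * zz k),
    Ideal.Quotient.mk (Ig3 k) (xx k * zz k ^ 2),
    Ideal.Quotient.mk (Ig3 k) (yy k ^ 3),
    Ideal.Quotient.mk (Ig3 k) (yy k ^ 2 * zz k),
    Ideal.Quotient.mk (Ig3 k) (zz k ^ 3),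
    Ideal.Quotient.mk (Ig3 k) (xx k ^ 4),
    Ideal.Quotient.mk (Ig3 k) (xx k ^ 3 * yy k),
    Ideal.Quotient.mk (Ig3 k) (xx k ^ 3 * zz k),
    Ideal.Quotient.mk (Ig3 k) (xx k * zz k ^ 3),
    Ideal.Quotient.mk (Ig3 k) (xx k ^ 4 * yy k)]

/-!
Write `a, b, c` for the images of `x, y, z` in `R = Q/g3`.

*Spanning.* Every power series is a constant plus an element of the ideal `(x, y, z)`, so for
every `m : R` one has `m R = k m + (a m) R + (b m) R + (c m) R`. Multiplying a listed monomial by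
a variable gives, modulo the relations, either `0` or another listed monomial of degree one
higher. Descending from `a⁴b`, which all three variables annihilate, one gets that `m R` lies in
the span for every listed monomial `m`, and in particular for `m = 1`. This replaces any argument
with limits or truncations of power series.

*Independence.* Modulo `g3` a monomial is either zero or equal to a listed one; the only
nontrivial coincidences are `x⁴ = y³z`, `x³y = z⁴`, `xz³ = y⁴` and `x⁴y = y⁴z = xz⁴`. Summing the
coefficients of a power series over each class gives 22 functionals on `Q`. They vanish on `g3`
and are dual to the listed monomials.
-/

namespace G3

open MvPowerSeries

/-! ### Spanning -/

section Spanning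

variable {k A : Type*} [Field k] [CommRing A] [Algebra k A]

/-- If `m` and the principal ideals of `a m`, `b m`, `c m` lie in the subspace `S`, then so does
the principal ideal of `m`, provided every element of `A` is a scalar plus an element of
`(a, b, c)`. -/
lemma step {a b c : A}
    (hdec : ∀ r : A, ∃ (t : k) (r₁ r₂ r₃ : A), r = algebraMap k A t + a * r₁ + b * r₂ + c * r₃)
    (S : Submodule k A) (m : A) {ma mb mc : A} (hm : m ∈ S)
    (ea : a * m = ma) (eb : b * m = mb) (ec : c * m = mc)
    (ha : ∀ r, ma * r ∈ S) (hb : ∀ r, mb * r ∈ S) (hc : ∀ r, mc * r ∈ S) :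
    ∀ r, m * r ∈ S := by
  intro r
  obtain ⟨t, r₁, r₂, r₃, rfl⟩ := hdec r
  have : m * (algebraMap k A t + a * r₁ + b * r₂ + c * r₃)
      = t • m + ma * r₁ + mb * r₂ + mc * r₃ := by
    rw [Algebra.smul_def, ← ea, ← eb, ← ec]; ring
  rw [this]
  exact S.add_mem (S.add_mem (S.add_mem (S.smul_mem t hm) (ha _)) (hb _)) (hc _)

/-- The spanning statement in any `k`-algebra whose generators satisfy the relations of `g3`. -/
lemma span_eq_top {a b c : A}
    (hdec : ∀ r : A, ∃ (t : k) (r₁ r₂ r₃ : A), r = algebraMap k A t + a * r₁ + b * r₂ + c * r₃)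
    (h1 : a * b ^ 2 = 0) (h2 : a * b * c = 0) (h3 : b * c ^ 2 = 0) (h4 : a ^ 4 = b ^ 3 * c)
    (h5 : a * c ^ 3 = b ^ 4) (h6 : a ^ 3 * b = c ^ 4) (h7 : a ^ 2 * c ^ 2 = 0)
    (S : Submodule k A) (m1 : 1 ∈ S) (ma : a ∈ S) (mb : b ∈ S) (mc : c ∈ S)
    (maa : a ^ 2 ∈ S) (mab : a * b ∈ S) (mac : a * c ∈ S) (mbb : b ^ 2 ∈ S) (mbc : b * c ∈ S)
    (mcc : c ^ 2 ∈ S) (maaa : a ^ 3 ∈ S) (maab : a ^ 2 * b ∈ S) (maac : a ^ 2 * c ∈ S)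
    (macc : a * c ^ 2 ∈ S) (mbbb : b ^ 3 ∈ S) (mbbc : b ^ 2 * c ∈ S) (mccc : c ^ 3 ∈ S)
    (maaaa : a ^ 4 ∈ S) (maaab : a ^ 3 * b ∈ S) (maaac : a ^ 3 * c ∈ S) (maccc : a * c ^ 3 ∈ S)
    (maaaab : a ^ 4 * b ∈ S) : S = ⊤ := by
  have p0 : ∀ r, (0 : A) * r ∈ S := fun r => by simp
  have a5 : a * a ^ 4 = 0 := by linear_combination a * h4 + b * c * h1
  have a4c : c * a ^ 4 = 0 := by linear_combination c * h4 + b ^ 2 * h3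
  have p5 := step hdec S (a ^ 4 * b) maaaab (ma := 0) (mb := 0) (mc := 0)
    (by linear_combination b * a5) (by linear_combination a ^ 3 * h1)
    (by linear_combination b * a4c) p0 p0 p0
  have p41 := step hdec S (a ^ 4) maaaa (mb := a ^ 4 * b) a5 (by ring) a4c p0 p5 p0
  have p42 := step hdec S (a ^ 3 * b) maaab (ma := a ^ 4 * b) (mb := 0) (mc := 0)
    (by ring) (by linear_combination a ^ 2 * h1) (by linear_combination a ^ 2 * h2) p5 p0 p0
  have p43 := step hdec S (a ^ 3 * c) maaac (ma := 0) (mb := 0) (mc := 0)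
    (by linear_combination a4c) (by linear_combination a ^ 2 * h2)
    (by linear_combination a * h7) p0 p0 p0
  have p44 := step hdec S (a * c ^ 3) maccc (ma := 0) (mb := 0) (mc := a ^ 4 * b)
    (by linear_combination c * h7) (by linear_combination c ^ 2 * h2)
    (by linear_combination -a * h6) p0 p0 p5
  have p31 := step hdec S (a ^ 3) maaa (ma := a ^ 4) (mb := a ^ 3 * b) (mc := a ^ 3 * c)
    (by ring) (by ring) (by ring) p41 p42 p43
  have p32 := step hdec S (a ^ 2 * b) maab (ma := a ^ 3 * b) (mb := 0) (mc := 0)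
    (by ring) (by linear_combination a * h1) (by linear_combination a * h2) p42 p0 p0
  have p33 := step hdec S (a ^ 2 * c) maac (ma := a ^ 3 * c) (mb := 0) (mc := 0)
    (by ring) (by linear_combination a * h2) (by linear_combination h7) p43 p0 p0
  have p34 := step hdec S (a * c ^ 2) macc (ma := 0) (mb := 0) (mc := a * c ^ 3)
    (by linear_combination h7) (by linear_combination c * h2) (by ring) p0 p0 p44
  have p35 := step hdec S (b ^ 3) mbbb (ma := 0) (mb := a * c ^ 3) (mc := a ^ 4)
    (by linear_combination b * h1) (by linear_combination -h5)
    (by linear_combination -h4) p0 p44 p41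
  have p36 := step hdec S (b ^ 2 * c) mbbc (ma := 0) (mb := a ^ 4) (mc := 0)
    (by linear_combination c * h1) (by linear_combination -h4)
    (by linear_combination b * h3) p0 p41 p0
  have p37 := step hdec S (c ^ 3) mccc (ma := a * c ^ 3) (mb := 0) (mc := a ^ 3 * b)
    (by ring) (by linear_combination c * h3) (by linear_combination -h6) p44 p0 p42
  have p21 := step hdec S (a ^ 2) maa (ma := a ^ 3) (mb := a ^ 2 * b) (mc := a ^ 2 * c)
    (by ring) (by ring) (by ring) p31 p32 p33
  have p22 := step hdec S (a * b) mab (ma := a ^ 2 * b) (mb := 0) (mc := 0)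
    (by ring) (by linear_combination h1) (by linear_combination h2) p32 p0 p0
  have p23 := step hdec S (a * c) mac (ma := a ^ 2 * c) (mb := 0) (mc := a * c ^ 2)
    (by ring) (by linear_combination h2) (by ring) p33 p0 p34
  have p24 := step hdec S (b ^ 2) mbb (ma := 0) (mb := b ^ 3) (mc := b ^ 2 * c)
    (by linear_combination h1) (by ring) (by ring) p0 p35 p36
  have p25 := step hdec S (b * c) mbc (ma := 0) (mb := b ^ 2 * c) (mc := 0)
    (by linear_combination h2) (by ring) (by linear_combination h3) p0 p36 p0
  have p26 := step hdec S (c ^ 2) mcc (ma := a * c ^ 2) (mb := 0) (mc := c ^ 3)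
    (by ring) (by linear_combination h3) (by ring) p34 p0 p37
  have p11 := step hdec S a ma (ma := a ^ 2) (mb := a * b) (mc := a * c)
    (by ring) (by ring) (by ring) p21 p22 p23
  have p12 := step hdec S b mb (ma := a * b) (mb := b ^ 2) (mc := b * c)
    (by ring) (by ring) (by ring) p22 p24 p25
  have p13 := step hdec S c mc (ma := a * c) (mb := b * c) (mc := c ^ 2)
    (by ring) (by ring) (by ring) p23 p25 p26
  have p := step hdec S 1 m1 (ma := a) (mb := b) (mc := c)
    (by ring) (by ring) (by ring) p11 p12 p13
  exact (Submodule.eq_top_iff').2 fun r => by simpa using p r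

end Spanning

variable (k : Type*) [Field k]

/-- Peel off the monomials divisible by `x`, then those divisible by `y`, then those divisible
by `z`. -/
lemma decomp (f : MvPowerSeries (Fin 3) k) : ∃ (t : k) (f₁ f₂ f₃ : MvPowerSeries (Fin 3) k),
    f = algebraMap k _ t + xx k * f₁ + yy k * f₂ + zz k * f₃ := by
  classical
  let g₀ : MvPowerSeries (Fin 3) k := fun m => if m 0 = 0 then coeff m f else 0
  let g₁ : MvPowerSeries (Fin 3) k := fun m => if m 0 = 0 ∧ m 1 = 0 then coeff m f else 0
  have c₀ : ∀ m, coeff m g₀ = if m 0 = 0 then coeff m f else 0 := fun m => rfl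
  have c₁ : ∀ m, coeff m g₁ = if m 0 = 0 ∧ m 1 = 0 then coeff m f else 0 := fun m => rfl
  have d₁ : X (0 : Fin 3) ∣ f - g₀ := by
    rw [X_dvd_iff]; intro m hm; simp [c₀, hm]
  have d₂ : X (1 : Fin 3) ∣ g₀ - g₁ := by
    rw [X_dvd_iff]; intro m hm; simp [c₀, c₁, hm]
  have d₃ : X (2 : Fin 3) ∣ g₁ - C (coeff 0 f) := by
    rw [X_dvd_iff]; intro m hm
    rw [map_sub, c₁, coeff_C]
    by_cases h : m = 0
    · simp [h]
    · have : ¬ (m 0 = 0 ∧ m 1 = 0) := fun h' => h <| by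
        ext i; fin_cases i
        exacts [h'.1, h'.2, hm]
      simp [h, this]
  obtain ⟨f₁, e₁⟩ := d₁
  obtain ⟨f₂, e₂⟩ := d₂
  obtain ⟨f₃, e₃⟩ := d₃
  refine ⟨coeff 0 f, f₁, f₂, f₃, ?_⟩
  rw [MvPowerSeries.algebraMap_apply, Algebra.algebraMap_self, RingHom.id_apply]
  unfold xx yy zz
  linear_combination e₁ + e₂ + e₃

/-! ### Independence -/

/-- The exponent vector of `x ^ p * y ^ q * z ^ r`. -/
def ex (p q r : ℕ) : Fin 3 →₀ ℕ := Finsupp.equivFunOnFinite.symm ![p, q, r]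

/-- The coefficient of `x ^ p * y ^ q * z ^ r`, as a linear functional. -/
def cf (p q r : ℕ) : MvPowerSeries (Fin 3) k →ₗ[k] k := coeff (ex p q r)

variable {k}

/-- Common form of the three shift lemmas below; `(p', q', r')` is `(p, q, r)` with the exponent of
`X i` lowered by one, which is only required to make sense when that exponent is positive. -/
lemma cf_mul_X (f : MvPowerSeries (Fin 3) k) (i : Fin 3) (p q r : ℕ) (p' q' r' : ℕ)
    (h : ex p q r i ≠ 0 → ex p q r = ex p' q' r' + Finsupp.single i 1) :
    cf k p q r (f * X i) = if ex p q r i = 0 then 0 else cf k p' q' r' f := by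
  classical
  unfold cf
  split_ifs with h0
  · exact (X_dvd_iff.1 (Dvd.intro_left f rfl)) _ h0
  · rw [h h0, X, coeff_add_mul_monomial, mul_one]

lemma cf_mul_x (f : MvPowerSeries (Fin 3) k) (p q r : ℕ) :
    cf k p q r (f * xx k) = if p = 0 then 0 else cf k (p - 1) q r f := by
  refine cf_mul_X f 0 p q r (p - 1) q r fun h => ?_
  have h : p ≠ 0 := h
  ext i; fin_cases i <;> simp [ex]; omega

lemma cf_mul_y (f : MvPowerSeries (Fin 3) k) (p q r : ℕ) :
    cf k p q r (f * yy k) = if q = 0 then 0 else cf k p (q - 1) r f := by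
  refine cf_mul_X f 1 p q r p (q - 1) r fun h => ?_
  have h : q ≠ 0 := h
  ext i; fin_cases i <;> simp [ex]; omega

lemma cf_mul_z (f : MvPowerSeries (Fin 3) k) (p q r : ℕ) :
    cf k p q r (f * zz k) = if r = 0 then 0 else cf k p q (r - 1) f := by
  refine cf_mul_X f 2 p q r p q (r - 1) fun h => ?_
  have h : r ≠ 0 := h
  ext i; fin_cases i <;> simp [ex]; omega

lemma cf_one (p q r : ℕ) :
    cf k p q r 1 = if p = 0 ∧ q = 0 ∧ r = 0 then 1 else 0 := by
  classical
  unfold cf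
  rw [coeff_one]
  congr 1
  simp [ex, Finsupp.ext_iff, Fin.forall_fin_succ]

variable (k)

/-- The functionals dual to the listed monomials: each sums the coefficients over all monomials
that agree with the given one modulo `g3`. -/
def dual : Fin 22 → MvPowerSeries (Fin 3) k →ₗ[k] k :=
  ![cf k 0 0 0, cf k 1 0 0, cf k 0 1 0, cf k 0 0 1,
    cf k 2 0 0, cf k 1 1 0, cf k 1 0 1, cf k 0 2 0, cf k 0 1 1, cf k 0 0 2,
    cf k 3 0 0, cf k 2 1 0, cf k 2 0 1, cf k 1 0 2, cf k 0 3 0, cf k 0 2 1, cf k 0 0 3,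
    cf k 4 0 0 + cf k 0 3 1, cf k 3 1 0 + cf k 0 0 4, cf k 3 0 1, cf k 1 0 3 + cf k 0 4 0,
    cf k 4 1 0 + cf k 0 4 1 + cf k 1 0 4]

/-- The listed monomials in `Q`. -/
def rep : Fin 22 → MvPowerSeries (Fin 3) k :=
  ![1, xx k, yy k, zz k, xx k ^ 2, xx k * yy k, xx k * zz k, yy k ^ 2, yy k * zz k, zz k ^ 2,
    xx k ^ 3, xx k ^ 2 * yy k, xx k ^ 2 * zz k, xx k * zz k ^ 2, yy k ^ 3, yy k ^ 2 * zz k,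
    zz k ^ 3, xx k ^ 4, xx k ^ 3 * yy k, xx k ^ 3 * zz k, xx k * zz k ^ 3, xx k ^ 4 * yy k]

lemma mons_eq (i : Fin 22) : mons_g3 k i = Ideal.Quotient.mk (Ig3 k) (rep k i) := by
  fin_cases i <;> rfl

set_option maxHeartbeats 4000000 in
/-- Duality of `dual` and `rep`. With the leading factor `1`, stripping variables from the right by
`cf_mul_x`, `cf_mul_y`, `cf_mul_z` always ends at `1`, where `cf_one` applies. -/
lemma dual_one_mul_rep (i j : Fin 22) : dual k j (1 * rep k i) = if i = j then 1 else 0 := by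
  fin_cases i <;> fin_cases j <;>
    simp [-one_mul, dual, rep, pow_succ, pow_zero, ← mul_assoc, cf_mul_x, cf_mul_y, cf_mul_z,
      cf_one]

lemma dual_ideal (j : Fin 22) {f : MvPowerSeries (Fin 3) k} (hf : f ∈ Ig3 k) :
    dual k j f = 0 := by
  -- The multiplier `g` makes the property stable under the scalar action of `Q` on `g3`.
  suffices h : ∀ g, dual k j (g * f) = 0 by simpa using h 1
  unfold Ig3 Ideal.span at hf
  induction hf using Submodule.span_induction with
  | mem f hf =>
    intro g
    simp only [Set.mem_insert_iff, Set.mem_singleton_iff] at hf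
    rcases hf with rfl | rfl | rfl | rfl | rfl | rfl | rfl <;> fin_cases j <;>
      simp [dual, pow_succ, mul_sub, ← mul_assoc, cf_mul_x, cf_mul_y, cf_mul_z]
  | zero => simp
  | add f₁ f₂ _ _ h₁ h₂ => intro g; rw [mul_add, map_add, h₁, h₂, add_zero]
  | smul r f _ h => intro g; rw [smul_eq_mul, ← mul_assoc]; exact h _

lemma linInd : LinearIndependent k (mons_g3 k) := by
  rw [Fintype.linearIndependent_iff]
  intro g hg j
  have hmem : ∑ i, g i • rep k i ∈ Ig3 k := by
    rw [← Ideal.Quotient.eq_zero_iff_mem, map_sum, ← hg]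
    exact Finset.sum_congr rfl fun i _ => by rw [mons_eq]; rfl
  have h0 := dual_ideal k j hmem
  have hd : ∀ i, dual k j (rep k i) = if i = j then 1 else 0 := fun i => by
    rw [← dual_one_mul_rep, one_mul]
  simpa [map_sum, hd] using h0

lemma span_top : Submodule.span k (Set.range (mons_g3 k)) = ⊤ := by
  have hdec : ∀ r : MvPowerSeries (Fin 3) k ⧸ Ig3 k, ∃ (t : k) (r₁ r₂ r₃ : _),
      r = algebraMap k _ t + Ideal.Quotient.mk (Ig3 k) (xx k) * r₁
        + Ideal.Quotient.mk (Ig3 k) (yy k) * r₂ + Ideal.Quotient.mk (Ig3 k) (zz k) * r₃ := by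
    intro r
    obtain ⟨f, rfl⟩ := Ideal.Quotient.mk_surjective r
    obtain ⟨t, f₁, f₂, f₃, h⟩ := decomp k f
    refine ⟨t, Ideal.Quotient.mk _ f₁, Ideal.Quotient.mk _ f₂, Ideal.Quotient.mk _ f₃, ?_⟩
    conv_lhs => rw [h]
    simp only [map_add, map_mul]
    rfl
  have hz : ∀ f ∈ ({xx k * yy k ^ 2, xx k * yy k * zz k, yy k * zz k ^ 2,
      xx k ^ 4 - yy k ^ 3 * zz k, xx k * zz k ^ 3 - yy k ^ 4, xx k ^ 3 * yy k - zz k ^ 4,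
      xx k ^ 2 * zz k ^ 2} : Set (MvPowerSeries (Fin 3) k)),
      Ideal.Quotient.mk (Ig3 k) f = 0 := fun f hf =>
    Ideal.Quotient.eq_zero_iff_mem.2 (Ideal.subset_span hf)
  simp only [Set.mem_insert_iff, Set.mem_singleton_iff, forall_eq_or_imp, forall_eq, map_sub,
    map_mul, map_pow, sub_eq_zero] at hz
  obtain ⟨h1, h2, h3, h4, h5, h6, h7⟩ := hz
  have hs : ∀ i, Ideal.Quotient.mk (Ig3 k) (rep k i) ∈
      Submodule.span k (Set.range (mons_g3 k)) := fun i => by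
    rw [← mons_eq]; exact Submodule.subset_span ⟨i, rfl⟩
  exact span_eq_top hdec h1 h2 h3 h4 h5 h6 h7 _ (hs 0) (hs 1) (hs 2) (hs 3) (hs 4) (hs 5) (hs 6)
    (hs 7) (hs 8) (hs 9) (hs 10) (hs 11) (hs 12) (hs 13) (hs 14) (hs 15) (hs 16) (hs 17) (hs 18)
    (hs 19) (hs 20) (hs 21)

end G3

theorem basis_g3 (k : Type*) [Field k] :
    Module.finrank k (MvPowerSeries (Fin 3) k ⧸ Ig3 k) = 22 ∧
    LinearIndependent k (mons_g3 k) ∧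
    Submodule.span k (Set.range (mons_g3 k)) = ⊤ := by
  refine ⟨?_, G3.linInd k, G3.span_top k⟩
  simpa using Module.finrank_eq_card_basis
    (Module.Basis.mk (G3.linInd k) (G3.span_top k).ge)
end
end

section
/- Let 𝔤₄ = (xy², xyz, yz², x⁴ − y³z, xz³ − y⁴, x³y − z⁴, x²z², x³z) ⊆ Q. Then the quotient ring R = Q/𝔤₄ is a finite-dimensional k-vector space of dimension 21; more precisely, the images of the 21 monomials 1; x, y, z; x², xy, xz, y², yz, z²; x³, x²y, x²z, xz², y³, y²z, z³; x⁴, x³y, xz³; x⁴y form a k-basis of R. -/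
/-!
All generators of `g4` are homogeneous, and each is a monomial or a difference of two monomials.
Hence `g4` identifies monomials with one another or kills them, and the classes of surviving
monomials are the 21 listed ones together with
`x⁴ ~ y³z`, `x³y ~ z⁴`, `xz³ ~ y⁴`, `x⁴y ~ y⁴z ~ xz⁴`.

*Independence.* For each class `S j` the functional `phi j`, summing the coefficients of a power
series over the monomials in `S j`, vanishes on `g4`: for a generator `n` or `n - n'` this says that
no member of `S j` is divisible by `n`, respectively that the quotients by `n` and by `n'` of members
of `S j` agree, which is a finite check. These functionals are dual to the listed monomials.

*Spanning.* The ideal contains `x⁵`, `y⁵`, `z⁵`, hence every power series whose coefficients vanish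
on the box of exponents `< 5`. So every class in the quotient is that of a polynomial, and every
monomial is zero or one of the listed ones modulo `g4`.
-/


/-!
STATEMENT 18: The quotient ring `R = Q/g4` is a finite-dimensional `k`-vector
space of dimension 21; the images of the 21 listed monomials form a `k`-basis of
`R`, i.e. they are linearly independent over `k` and span `R`.

Here `Q = k[[x,y,z]]` is formalized as `MvPowerSeries (Fin 3) k` with
`x = X 0`, `y = X 1`, `z = X 2`.
-/

noncomputable section

/-- The family of images in `R = Q/g4` of the 21 listed monomials. -/
def mons_g4 (k : Type*) [Field k] : Fin 21 → (MvPowerSeries (Fin 3) k ⧸ Ig4 k) :=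
  ![Ideal.Quotient.mk (Ig4 k) (1),
    Ideal.Quotient.mk (Ig4 k) (xx k),
    Ideal.Quotient.mk (Ig4 k) (yy k),
    Ideal.Quotient.mk (Ig4 k) (zz k),
    Ideal.Quotient.mk (Ig4 k) (xx k ^ 2),
    Ideal.Quotient.mk (Ig4 k) (xx k * yy k),
    Ideal.Quotient.mk (Ig4 k) (xx k * zz k),
    Ideal.Quotient.mk (Ig4 k) (yy k ^ 2),
    Ideal.Quotient.mk (Ig4 k) (yy k * zz k),
    Ideal.Quotient.mk (Ig4 k) (zz k ^ 2),
    Ideal.Quotient.mk (Ig4 k) (xx k ^ 3),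
    Ideal.Quotient.mk (Ig4 k) (xx k ^ 2 * yy k),
    Ideal.Quotient.mk (Ig4 k) (xx k ^ 2 * zz k),
    Ideal.Quotient.mk (Ig4 k) (xx k * zz k ^ 2),
    Ideal.Quotient.mk (Ig4 k) (yy k ^ 3),
    Ideal.Quotient.mk (Ig4 k) (yy k ^ 2 * zz k),
    Ideal.Quotient.mk (Ig4 k) (zz k ^ 3),
    Ideal.Quotient.mk (Ig4 k) (xx k ^ 4),
    Ideal.Quotient.mk (Ig4 k) (xx k ^ 3 * yy k),
    Ideal.Quotient.mk (Ig4 k) (xx k * zz k ^ 3),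
    Ideal.Quotient.mk (Ig4 k) (xx k ^ 4 * yy k)]

/-! ### Linear independence -/

namespace G4

open MvPowerSeries

/-- Exponent vectors `(a, b, c)`, standing for the monomial `x ^ a * y ^ b * z ^ c`. -/
abbrev T := ℕ × ℕ × ℕ

/-- The exponent vector `p` as a finitely supported function. -/
def e (p : T) : Fin 3 →₀ ℕ := Finsupp.equivFunOnFinite.symm ![p.1, p.2.1, p.2.2]

lemma e_le (p q : T) : e p ≤ e q ↔ p ≤ q := by
  simp [Finsupp.le_def, Fin.forall_fin_succ, e, Prod.le_def]

lemma e_sub (p q : T) : e p - e q = e (p - q) := by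
  ext i
  fin_cases i <;> simp [e]

lemma e_inj : Function.Injective e := by
  intro p q h
  exact le_antisymm ((e_le p q).1 h.le) ((e_le q p).1 h.ge)

lemma e_surj (m : Fin 3 →₀ ℕ) : e (m 0, m 1, m 2) = m := by
  ext i
  fin_cases i <;> simp [e]

variable (k : Type*) [Field k]

/-- The monomial with exponent vector `p`, as a power series. -/
def mon (p : T) : MvPowerSeries (Fin 3) k := xx k ^ p.1 * yy k ^ p.2.1 * zz k ^ p.2.2

lemma mon_eq (p : T) : mon k p = monomial (e p) (1 : k) := by
  simp only [mon, xx, yy, zz, X_pow_eq, monomial_mul_monomial, mul_one]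
  congr 1
  congr 1
  ext i
  fin_cases i <;> simp [e]

lemma coeff_mul_mon (p n : T) (f : MvPowerSeries (Fin 3) k) :
    coeff (e p) (f * mon k n) = if n ≤ p then coeff (e (p - n)) f else 0 := by
  rw [mon_eq, coeff_mul_monomial]
  simp only [e_le, e_sub, mul_one]

/-- Exponents of the 21 basis monomials, in the order of `mons_g4`. -/
def E : Fin 21 → T :=
  ![(0,0,0), (1,0,0), (0,1,0), (0,0,1), (2,0,0), (1,1,0), (1,0,1), (0,2,0), (0,1,1), (0,0,2),
    (3,0,0), (2,1,0), (2,0,1), (1,0,2), (0,3,0), (0,2,1), (0,0,3),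
    (4,0,0), (3,1,0), (1,0,3), (4,1,0)]

/-- `S j` lists the exponents of all monomials congruent modulo `g4` to the `j`-th basis monomial. -/
def S : Fin 21 → Multiset T :=
  ![{(0,0,0)}, {(1,0,0)}, {(0,1,0)}, {(0,0,1)}, {(2,0,0)}, {(1,1,0)}, {(1,0,1)}, {(0,2,0)},
    {(0,1,1)}, {(0,0,2)}, {(3,0,0)}, {(2,1,0)}, {(2,0,1)}, {(1,0,2)}, {(0,3,0)}, {(0,2,1)},
    {(0,0,3)},
    {(4,0,0), (0,3,1)}, {(3,1,0), (0,0,4)}, {(1,0,3), (0,4,0)}, {(4,1,0), (0,4,1), (1,0,4)}]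

/-- The linear functional summing the coefficients over the class `S j`. -/
def phi (j : Fin 21) (f : MvPowerSeries (Fin 3) k) : k :=
  ((S j).map fun p => coeff (e p) f).sum

lemma phi_add (j : Fin 21) (f g : MvPowerSeries (Fin 3) k) :
    phi k j (f + g) = phi k j f + phi k j g := by
  simp [phi]

lemma phi_sub (j : Fin 21) (f g : MvPowerSeries (Fin 3) k) :
    phi k j (f - g) = phi k j f - phi k j g := by
  simp [phi]

/-- Only members of `S j` divisible by `n` contribute, each through its quotient by `n`. -/
lemma phi_mul_mon (j : Fin 21) (n : T) (f : MvPowerSeries (Fin 3) k) :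
    phi k j (f * mon k n) =
      ((((S j).filter (n ≤ ·)).map (· - n)).map fun p => coeff (e p) f).sum := by
  simp only [phi, coeff_mul_mon, Multiset.map_map, Function.comp_apply]
  induction S j using Multiset.induction_on with
  | empty => simp
  | cons a s ih =>
    by_cases h : n ≤ a
    · simp [Multiset.filter_cons_of_pos _ h, h, ih]
    · simp [Multiset.filter_cons_of_neg _ h, h, ih]

lemma phi_zero_of_mono (n : T) (h : ∀ j, (S j).filter (n ≤ ·) = 0) (j : Fin 21)
    (f : MvPowerSeries (Fin 3) k) : phi k j (f * mon k n) = 0 := by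
  rw [phi_mul_mon, h]
  simp

lemma phi_zero_of_bin (n n' : T)
    (h : ∀ j, ((S j).filter (n ≤ ·)).map (· - n) = ((S j).filter (n' ≤ ·)).map (· - n'))
    (j : Fin 21) (f : MvPowerSeries (Fin 3) k) :
    phi k j (f * (mon k n - mon k n')) = 0 := by
  rw [mul_sub, phi_sub, phi_mul_mon, phi_mul_mon, h, sub_self]

lemma Ig4_eq : Ig4 k = Ideal.span {mon k (1,2,0), mon k (1,1,1), mon k (0,1,2),
    mon k (4,0,0) - mon k (0,3,1), mon k (1,0,3) - mon k (0,4,0),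
    mon k (3,1,0) - mon k (0,0,4), mon k (2,0,2), mon k (3,0,1)} := by
  simp [Ig4, mon]

/-- `phi j` vanishes on `g4`. The extra factor `a` makes the induction over the ideal go through,
as `phi j` is not linear over power series. -/
lemma phi_mul_eq_zero (f : MvPowerSeries (Fin 3) k) (hf : f ∈ Ig4 k) (j : Fin 21)
    (a : MvPowerSeries (Fin 3) k) : phi k j (a * f) = 0 := by
  rw [Ig4_eq] at hf
  induction hf using Submodule.span_induction generalizing a with
  | zero => simp [phi]
  | add f g _ _ hf hg => rw [mul_add, phi_add, hf, hg, add_zero]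
  | smul b f _ hf => rw [smul_eq_mul, ← mul_assoc, hf]
  | mem g hg =>
    simp only [Set.mem_insert_iff, Set.mem_singleton_iff] at hg
    rcases hg with rfl | rfl | rfl | rfl | rfl | rfl | rfl | rfl
    · exact phi_zero_of_mono k _ (by decide) j a
    · exact phi_zero_of_mono k _ (by decide) j a
    · exact phi_zero_of_mono k _ (by decide) j a
    · exact phi_zero_of_bin k _ _ (by decide) j a
    · exact phi_zero_of_bin k _ _ (by decide) j a
    · exact phi_zero_of_bin k _ _ (by decide) j a
    · exact phi_zero_of_mono k _ (by decide) j a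
    · exact phi_zero_of_mono k _ (by decide) j a

lemma phi_smul_mon (i j : Fin 21) (c : k) :
    phi k j (c • mon k (E i)) = if i = j then c else 0 := by
  have h1 : ∀ i j : Fin 21, (S j).count (E i) = if i = j then 1 else 0 := by decide
  have h2 : ∀ s : Multiset T, (s.map fun p => coeff (e p) (c • mon k (E i))).sum =
      s.count (E i) • c := by
    intro s
    induction s using Multiset.induction_on with
    | empty => simp
    | cons a s ih =>
      rw [Multiset.map_cons, Multiset.sum_cons, ih, mon_eq, Multiset.count_cons, add_smul, add_comm]
      by_cases h : E i = a
      · simp [h]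
      · have : e a ≠ e (E i) := fun h' => h (e_inj h').symm
        simp [h, coeff_monomial, this]
  rw [phi, h2, h1]
  split_ifs <;> simp

lemma mons_eq (i : Fin 21) : mons_g4 k i = Ideal.Quotient.mk (Ig4 k) (mon k (E i)) := by
  fin_cases i <;> simp [mons_g4, mon, E]

lemma linInd : LinearIndependent k (mons_g4 k) := by
  rw [Fintype.linearIndependent_iff]
  intro g hg j
  have h1 : Ideal.Quotient.mk (Ig4 k) (∑ i, g i • mon k (E i)) = 0 := by
    rw [← hg, map_sum]
    refine Finset.sum_congr rfl fun i _ => ?_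
    rw [mons_eq]
    rfl
  have h2 := phi_mul_eq_zero k _ (Ideal.Quotient.eq_zero_iff_mem.1 h1) j 1
  have h3 : ∀ s : Finset (Fin 21), phi k j (∑ i ∈ s, g i • mon k (E i)) =
      ∑ i ∈ s, phi k j (g i • mon k (E i)) := fun s =>
    map_sum (AddMonoidHom.mk' (phi k j) (phi_add k j)) _ _
  rw [one_mul, h3] at h2
  simpa [phi_smul_mon] using h2

/-! ### Spanning -/

/-- `Rel x y z` says that `x`, `y`, `z` satisfy the defining relations of `g4`. -/
def Rel {R : Type*} [CommRing R] (x y z : R) : Prop :=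
  x * y ^ 2 = 0 ∧ x * y * z = 0 ∧ y * z ^ 2 = 0 ∧ x ^ 4 = y ^ 3 * z ∧ x * z ^ 3 = y ^ 4 ∧
    x ^ 3 * y = z ^ 4 ∧ x ^ 2 * z ^ 2 = 0 ∧ x ^ 3 * z = 0

lemma fifth_powers {R : Type*} [CommRing R] {x y z : R}
    (h : Rel x y z) :
    x ^ 5 = 0 ∧ y ^ 5 = 0 ∧ z ^ 5 = 0 := by
  obtain ⟨h1, h2, h3, h4, h5, h6, h7, h8⟩ := h
  refine ⟨?_, ?_, ?_⟩
  · linear_combination x * h4 + y * z * h1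
  · linear_combination -y * h5 + x * z * h3
  · linear_combination -z * h6 + y * h8

lemma rel_mk : Rel (Ideal.Quotient.mk (Ig4 k) (xx k)) (Ideal.Quotient.mk (Ig4 k) (yy k))
    (Ideal.Quotient.mk (Ig4 k) (zz k)) := by
  simp only [Rel, ← map_pow, ← map_mul, Ideal.Quotient.eq, Ideal.Quotient.eq_zero_iff_mem]
  refine ⟨?_, ?_, ?_, ?_, ?_, ?_, ?_, ?_⟩ <;> exact Ideal.subset_span (by simp)

/-- A power series supported outside the box of exponents `< 5` is a combination of
`x⁵`, `y⁵` and `z⁵`, so it lies in `g4`. -/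
lemma mem_of_coeff_box (f : MvPowerSeries (Fin 3) k)
    (hf : ∀ m : Fin 3 →₀ ℕ, m 0 < 5 → m 1 < 5 → m 2 < 5 → coeff m f = 0) : f ∈ Ig4 k := by
  obtain ⟨hx, hy, hz⟩ := fifth_powers (rel_mk k)
  rw [← map_pow, Ideal.Quotient.eq_zero_iff_mem] at hx hy hz
  classical
  let f1 : MvPowerSeries (Fin 3) k := fun m => if 5 ≤ m 0 then coeff m f else 0
  let f2 : MvPowerSeries (Fin 3) k := fun m => if m 0 < 5 ∧ 5 ≤ m 1 then coeff m f else 0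
  let f3 : MvPowerSeries (Fin 3) k :=
    fun m => if m 0 < 5 ∧ m 1 < 5 ∧ 5 ≤ m 2 then coeff m f else 0
  have c1 : ∀ m, coeff m f1 = if 5 ≤ m 0 then coeff m f else 0 := fun _ => rfl
  have c2 : ∀ m, coeff m f2 = if m 0 < 5 ∧ 5 ≤ m 1 then coeff m f else 0 := fun _ => rfl
  have c3 : ∀ m, coeff m f3 = if m 0 < 5 ∧ m 1 < 5 ∧ 5 ≤ m 2 then coeff m f else 0 :=
    fun _ => rfl
  have h1 : f1 ∈ Ig4 k := by
    refine Ideal.mem_of_dvd _ (X_pow_dvd_iff.2 fun m hm => ?_) hx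
    rw [c1, if_neg (by lia)]
  have h2 : f2 ∈ Ig4 k := by
    refine Ideal.mem_of_dvd _ (X_pow_dvd_iff.2 fun m hm => ?_) hy
    rw [c2, if_neg (by lia)]
  have h3 : f3 ∈ Ig4 k := by
    refine Ideal.mem_of_dvd _ (X_pow_dvd_iff.2 fun m hm => ?_) hz
    rw [c3, if_neg (by lia)]
  have : f = f1 + f2 + f3 := by
    ext m
    rw [map_add, map_add, c1, c2, c3]
    by_cases a0 : 5 ≤ m 0
    · simp [a0, not_lt.2 a0]
    · by_cases a1 : 5 ≤ m 1
      · simp [a0, a1, not_le.1 a0]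
      · by_cases a2 : 5 ≤ m 2
        · simp [a0, a1, a2, not_le.1 a0, not_le.1 a1]
        · simp [a0, a1, a2, hf m (not_le.1 a0) (not_le.1 a1) (not_le.1 a2)]
  rw [this]
  exact add_mem (add_mem h1 h2) h3

/-- Every monomial is, in the quotient, zero or one of the 21 listed monomials. -/
lemma mon_cases {R : Type*} [CommRing R] {x y z : R}
    (h : Rel x y z) (a b c : ℕ) :
    x ^ a * y ^ b * z ^ c = 0 ∨
      ∃ i, x ^ a * y ^ b * z ^ c = x ^ (E i).1 * y ^ (E i).2.1 * z ^ (E i).2.2 := by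
  obtain ⟨hx, hy, hz⟩ := fifth_powers h
  obtain ⟨h1, h2, h3, h4, h5, h6, h7, h8⟩ := h
  -- A monomial divisible by one that vanishes is zero.
  have key : ∀ p q r : ℕ, x ^ p * y ^ q * z ^ r = 0 → p ≤ a → q ≤ b → r ≤ c →
      x ^ a * y ^ b * z ^ c = 0 := by
    intro p q r h ha hb hc
    have := mul_dvd_mul (mul_dvd_mul (pow_dvd_pow x ha) (pow_dvd_pow y hb)) (pow_dvd_pow z hc)
    rw [h] at this
    exact zero_dvd_iff.1 this
  by_cases k1 : 5 ≤ a
  · exact .inl (key 5 0 0 (by simp [hx]) k1 (by simp) (by simp))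
  by_cases k2 : 5 ≤ b
  · exact .inl (key 0 5 0 (by simp [hy]) (by simp) k2 (by simp))
  by_cases k3 : 5 ≤ c
  · exact .inl (key 0 0 5 (by simp [hz]) (by simp) (by simp) k3)
  by_cases k4 : 1 ≤ a ∧ 2 ≤ b
  · exact .inl (key 1 2 0 (by simp [h1]) k4.1 k4.2 (by simp))
  by_cases k5 : 1 ≤ a ∧ 1 ≤ b ∧ 1 ≤ c
  · exact .inl (key 1 1 1 (by simp [h2]) k5.1 k5.2.1 k5.2.2)
  by_cases k6 : 1 ≤ b ∧ 2 ≤ c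
  · exact .inl (key 0 1 2 (by simp [h3]) (by simp) k6.1 k6.2)
  by_cases k7 : 2 ≤ a ∧ 2 ≤ c
  · exact .inl (key 2 0 2 (by simp [h7]) k7.1 (by simp) k7.2)
  by_cases k8 : 3 ≤ a ∧ 1 ≤ c
  · exact .inl (key 3 0 1 (by simp [h8]) k8.1 (by simp) k8.2)
  right
  -- The five surviving monomials that are not listed themselves.
  by_cases u : (a, b, c) = (0, 3, 1)
  · obtain ⟨rfl, rfl, rfl⟩ : a = 0 ∧ b = 3 ∧ c = 1 := by simpa using u
    exact ⟨17, by simp [E]; linear_combination -h4⟩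
  by_cases u2 : (a, b, c) = (0, 0, 4)
  · obtain ⟨rfl, rfl, rfl⟩ : a = 0 ∧ b = 0 ∧ c = 4 := by simpa using u2
    exact ⟨18, by simp [E]; linear_combination -h6⟩
  by_cases u3 : (a, b, c) = (0, 4, 0)
  · obtain ⟨rfl, rfl, rfl⟩ : a = 0 ∧ b = 4 ∧ c = 0 := by simpa using u3
    exact ⟨19, by simp [E]; linear_combination -h5⟩
  by_cases u4 : (a, b, c) = (0, 4, 1)
  · obtain ⟨rfl, rfl, rfl⟩ : a = 0 ∧ b = 4 ∧ c = 1 := by simpa using u4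
    exact ⟨20, by simp [E]; linear_combination -y * h4⟩
  by_cases u5 : (a, b, c) = (1, 0, 4)
  · obtain ⟨rfl, rfl, rfl⟩ : a = 1 ∧ b = 0 ∧ c = 4 := by simpa using u5
    exact ⟨20, by simp [E]; linear_combination -x * h6⟩
  have fin : ∀ a b c : Fin 5, (¬(1 ≤ a.1 ∧ 2 ≤ b.1) ∧ ¬(1 ≤ a.1 ∧ 1 ≤ b.1 ∧ 1 ≤ c.1) ∧
      ¬(1 ≤ b.1 ∧ 2 ≤ c.1) ∧ ¬(2 ≤ a.1 ∧ 2 ≤ c.1) ∧ ¬(3 ≤ a.1 ∧ 1 ≤ c.1) ∧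
      (a.1, b.1, c.1) ∉ [(0, 3, 1), (0, 0, 4), (0, 4, 0), (0, 4, 1), (1, 0, 4)]) →
      ∃ i, E i = (a.1, b.1, c.1) := by decide
  obtain ⟨i, hi⟩ := fin ⟨a, by lia⟩ ⟨b, by lia⟩ ⟨c, by lia⟩
    ⟨k4, k5, k6, k7, k8, by simp only [List.mem_cons, List.not_mem_nil]; tauto⟩
  exact ⟨i, by rw [hi]⟩

lemma mk_mon_mem (p : T) :
    Ideal.Quotient.mk (Ig4 k) (mon k p) ∈ Submodule.span k (Set.range (mons_g4 k)) := by
  have h := mon_cases (rel_mk k) p.1 p.2.1 p.2.2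
  simp only [← map_pow, ← map_mul] at h
  rcases h with h | ⟨i, h⟩
  · rw [mon, h]
    exact zero_mem _
  · rw [mon, h]
    exact Submodule.subset_span ⟨i, mons_eq k i⟩

lemma mk_poly_mem (p : MvPolynomial (Fin 3) k) :
    Ideal.Quotient.mk (Ig4 k) (p : MvPowerSeries (Fin 3) k) ∈
      Submodule.span k (Set.range (mons_g4 k)) := by
  induction p using MvPolynomial.induction_on' with
  | monomial m c =>
    have : ((MvPolynomial.monomial m c : MvPolynomial (Fin 3) k) : MvPowerSeries (Fin 3) k) =
        c • mon k (m 0, m 1, m 2) := by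
      rw [mon_eq, e_surj, MvPolynomial.coe_monomial, ← map_smul, smul_eq_mul, mul_one]
    rw [this]
    exact Submodule.smul_mem _ c (mk_mon_mem k _)
  | add p q hp hq =>
    rw [MvPolynomial.coe_add, map_add]
    exact add_mem hp hq

lemma span_top : Submodule.span k (Set.range (mons_g4 k)) = ⊤ := by
  rw [eq_top_iff]
  rintro r -
  obtain ⟨f, rfl⟩ := Ideal.Quotient.mk_surjective r
  have h : f - (trunc' k (e (4, 4, 4)) f : MvPolynomial (Fin 3) k) ∈ Ig4 k := by
    refine mem_of_coeff_box k _ fun m h0 h1 h2 => ?_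
    have hm : m ≤ e (4, 4, 4) := by
      rw [← e_surj m, e_le]
      exact ⟨by simp; lia, by simp; lia, by simp; lia⟩
    rw [map_sub, MvPolynomial.coeff_coe, coeff_trunc', if_pos hm, sub_self]
  rw [Ideal.Quotient.eq.2 h]
  exact mk_poly_mem k _

end G4

theorem basis_g4 (k : Type*) [Field k] :
    Module.finrank k (MvPowerSeries (Fin 3) k ⧸ Ig4 k) = 21 ∧
    LinearIndependent k (mons_g4 k) ∧
    Submodule.span k (Set.range (mons_g4 k)) = ⊤ := by
  refine ⟨?_, G4.linInd k, G4.span_top k⟩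
  have := Module.finrank_eq_card_basis (Module.Basis.mk (G4.linInd k) (G4.span_top k).ge)
  simpa using this
end
end
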